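/- Let n ≥ 3 be odd and let G be a connected well-covered unicyclic graph of order n. If n ≤ 7, then C_n ⪯ G. If n ≥ 9, then H ⪯ G for every graph H of order n in the family S_P. -/

import Mathlib

/-!
At a vertex `w` with a pendant neighbour, a well-covered graph `G` has both `G - w` and `G - N[w]`
well-covered. This property passes to both sides of a bridge at `w`, and in a unicyclic graph of
odd order the only parts without a bridge at their root are single vertices and triangles or
pentagons with a tree attached at one vertex. Along this decomposition one finds a tree `T` with
`a` edges such that `I(G, x) = (1 + x) ^ a * I(T, x / (1 + x))`, where `2 * a + 1` is the order
of `G`.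

For the graphs in `S_P` the tree `T` is the path with `a` edges; `C_n` gives the same polynomial for
`n = 3, 5`, and one that is larger on `(-1, 0)` for `n = 7`. So it remains to show that, among the
trees `T` with `a` edges, the path has the largest independence polynomial on every interval
`[t, 0]` free of roots of `I(T, x)`. This follows by induction on rooted trees, if the ratio between
the independent sets containing the root and all independent sets is compared along with the
polynomial. A unicyclic graph without a pendant vertex is a cycle, and `C_n` is not well-covered for
`n ≥ 8`.
-/

open Polynomial SimpleGraph

/-- A finset of vertices is independent: pairwise nonadjacent. -/
def IsIndepFinset {V : Type*} (G : SimpleGraph V) (s : Finset V) : Prop :=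
  ∀ u ∈ s, ∀ v ∈ s, ¬ G.Adj u v

open Classical in
/-- The independence polynomial of a finite graph, with real coefficients. -/
noncomputable def indepPoly {V : Type*} [Fintype V] (G : SimpleGraph V) : Polynomial ℝ :=
  ∑ s : Finset V, if IsIndepFinset G s then (X : Polynomial ℝ) ^ s.card else 0

/-- `xi G` : the largest real root of the independence polynomial of `G`. -/
noncomputable def xi {V : Type*} [Fintype V] (G : SimpleGraph V) : ℝ :=
  sSup {x : ℝ | (indepPoly G).eval x = 0}

/-- `Pre H G` (`H ⪯ G`) : `I(H,x) ≥ I(G,x)` for all `x ∈ [ξ(G), 0]`. -/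
def Pre {V W : Type*} [Fintype V] [Fintype W] (H : SimpleGraph W) (G : SimpleGraph V) : Prop :=
  ∀ x ∈ Set.Icc (xi G) 0, (indepPoly G).eval x ≤ (indepPoly H).eval x

/-- `SPre H G` (`H ≺ G`). -/
def SPre {V W : Type*} [Fintype V] [Fintype W] (H : SimpleGraph W) (G : SimpleGraph V) : Prop :=
  Pre H G ∧ indepPoly H ≠ indepPoly G

open Classical in
/-- A graph is well-covered if all maximal independent sets have the same size. -/
def WellCovered {V : Type*} (G : SimpleGraph V) : Prop :=
  ∀ s t : Finset V,
    IsIndepFinset G s → (∀ v ∉ s, ¬ IsIndepFinset G (insert v s)) →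
    IsIndepFinset G t → (∀ v ∉ t, ¬ IsIndepFinset G (insert v t)) →
    s.card = t.card

/-- A connected unicyclic graph: connected with as many edges as vertices. -/
def Unicyclic {V : Type*} [Fintype V] (G : SimpleGraph V) : Prop :=
  G.Connected ∧ G.edgeSet.ncard = Fintype.card V

/-- The graph star (corona with `K₁`) of `G`: each vertex `inl v` gets a pendant
vertex `inr v`. -/
def corona {V : Type*} (G : SimpleGraph V) : SimpleGraph (V ⊕ V) :=
  SimpleGraph.fromRel (fun a b =>
    match a, b with
    | Sum.inl u, Sum.inl v => G.Adj u v
    | Sum.inl u, Sum.inr v => u = v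
    | _, _ => False)

/-- `Ugraph n` (`U_n`, `n ≥ 3`): a triangle `0,1,2` with `n - 3` pendant vertices attached
to vertex `0`. -/
def Ugraph (n : ℕ) : SimpleGraph (Fin n) :=
  SimpleGraph.fromRel (fun i j => i.val = 0 ∨ (i.val = 1 ∧ j.val = 2))

/-- `Dgraph n` (`D_n`, `n ≥ 4`): a path `0,1,...,n-1` plus the chord `{0,2}`, i.e. a
triangle with a path on `n - 3` vertices attached. -/
def Dgraph (n : ℕ) : SimpleGraph (Fin n) :=
  SimpleGraph.fromRel (fun i j => j.val = i.val + 1 ∨ (i.val = 0 ∧ j.val = 2))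

/-- `starGraph n` (`S_n = K_{1,n-1}`): vertex `0` adjacent to all other vertices. -/
def starGraph (n : ℕ) : SimpleGraph (Fin n) :=
  SimpleGraph.fromRel (fun i _ => i.val = 0)

/-- `Mgraph n` (`M_n`, odd `n ≥ 5`): a triangle `0,1,2` with `(n-3)/2` paths of length two
attached at vertex `0`; the middle vertices are the odd indices `3,5,...,n-2` and the leaf
attached to middle vertex `i` is `i + 1`. -/
def Mgraph (n : ℕ) : SimpleGraph (Fin n) :=
  SimpleGraph.fromRel (fun i j =>
    (i.val = 0 ∧ (j.val ≤ 2 ∨ j.val % 2 = 1)) ∨ (i.val = 1 ∧ j.val = 2) ∨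
    (i.val % 2 = 1 ∧ 3 ≤ i.val ∧ j.val = i.val + 1))

/-- `SPgraph g k ℓ` (`G(g,k,ℓ)`, for `g ∈ {3,5}` and `k + ℓ ≥ 1`): a cycle on the vertices
`0,...,g-1`, a copy of `P_k*` on the vertices `g,...,g+2k-1` (path vertices at even offsets,
each followed by its pendant vertex) joined to the cycle vertex `0` by an edge to the
path end `g`, and a copy of `P_ℓ*` on the vertices `g+2k,...,g+2k+2ℓ-1` joined to the cycle
vertex `2` by an edge to the path end `g+2k`. -/
def SPgraph (g k ℓ : ℕ) : SimpleGraph (Fin (g + 2*k + 2*ℓ)) :=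
  SimpleGraph.fromRel (fun i j =>
    (i.val < g ∧ j.val < g ∧ (j.val = i.val + 1 ∨ (i.val = 0 ∧ j.val = g - 1))) ∨
    (i.val = 0 ∧ 0 < k ∧ j.val = g) ∨
    (g ≤ i.val ∧ i.val < g + 2*k ∧ (i.val - g) % 2 = 0 ∧
      (j.val = i.val + 1 ∨ (j.val = i.val + 2 ∧ j.val < g + 2*k))) ∨
    (i.val = 2 ∧ 0 < ℓ ∧ j.val = g + 2*k) ∨
    (g + 2*k ≤ i.val ∧ (i.val - (g + 2*k)) % 2 = 0 ∧
      (j.val = i.val + 1 ∨ j.val = i.val + 2)))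

/-- `Gtree n` (`G_{2n}`, `n ≥ 5`): the tree on `2n` vertices with path `v_1 … v_n` at
indices `0,…,n-1`, `z_1` at index `n`, `y_1, y_2` at `n+1, n+2`, `x_1, x_2` at `n+3, n+4`
(with `v_3 z_1`, `v_3 y_1`, `y_1 y_2`, `v_5 x_1`, `x_1 x_2` edges), and pendant vertices
`w_j` at index `n + j - 1` attached to `v_j` for `6 ≤ j ≤ n`. -/
def Gtree (n : ℕ) : SimpleGraph (Fin (2*n)) :=
  SimpleGraph.fromRel (fun a b =>
    (a.val + 1 = b.val ∧ b.val < n) ∨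
    (a.val = 2 ∧ (b.val = n ∨ b.val = n + 1)) ∨
    (a.val = n + 1 ∧ b.val = n + 2) ∨
    (a.val = 4 ∧ b.val = n + 3) ∨
    (a.val = n + 3 ∧ b.val = n + 4) ∨
    (5 ≤ a.val ∧ a.val < n ∧ b.val = n + a.val))

section LastZero

variable {f : ℝ → ℝ} {a b : ℝ}

lemma le_of_forall_mem_Ioc_of_continuous (hf : Continuous f) {g : ℝ → ℝ} (hg : Continuous g)
    (hab : a < b) (h : ∀ u ∈ Set.Ioc a b, f u ≤ g u) : f a ≤ g a := by
  have hclosed : IsClosed {u | f u ≤ g u} := isClosed_le hf hg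
  have := closure_minimal h hclosed
  rw [closure_Ioc hab.ne] at this
  exact this (Set.left_mem_Icc.2 hab.le)

lemma exists_last_zero (hf : Continuous f) (hb : 0 < f b)
    (h : ∃ t ∈ Set.Icc a b, f t ≤ 0) :
    ∃ z ∈ Set.Ico a b, f z = 0 ∧ ∀ u ∈ Set.Ioc z b, 0 < f u := by
  have hK : IsCompact (Set.Icc a b ∩ f ⁻¹' Set.Iic 0) :=
    isCompact_Icc.inter_right (isClosed_Iic.preimage hf)
  obtain ⟨z, ⟨⟨haz, hzb⟩, hz⟩, hmax⟩ := hK.exists_isGreatest h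
  have hpos : ∀ u ∈ Set.Ioc z b, 0 < f u := fun u hu => by
    by_contra! hfu
    exact hu.1.not_ge (hmax ⟨⟨haz.trans hu.1.le, hu.2⟩, hfu⟩)
  have hlt : z < b := hzb.lt_of_ne (by rintro rfl; exact hb.not_ge hz)
  exact ⟨z, ⟨haz, hlt⟩, le_antisymm hz
    (le_of_forall_mem_Ioc_of_continuous continuous_const hf hlt fun u hu => (hpos u hu).le), hpos⟩

end LastZero

/-- Rooted trees, generated from the single vertex `leaf` by joining the roots of two rooted trees
with an edge; the root of the first tree remains the root. -/
inductive RTree : Type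
  | leaf : RTree
  | join : RTree → RTree → RTree

namespace RTree

/-- The number of edges, one less than the order. -/
def rank : RTree → ℕ
  | leaf => 0
  | join s t => rank s + rank t + 1

mutual

/-- The independence polynomial of a rooted tree, as a function on the reals. -/
def poly : RTree → ℝ → ℝ
  | leaf, x => 1 + x
  | join s t, x => poly s x * poly t x - rootPoly s x * rootPoly t x

/-- The part of the independence polynomial of a rooted tree that counts the independent sets
containing the root. -/
def rootPoly : RTree → ℝ → ℝ
  | leaf, x => x
  | join s t, x => rootPoly s x * (poly t x - rootPoly t x)

end

/-- The path with `m` edges, rooted at an end. -/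
def path : ℕ → RTree
  | 0 => leaf
  | m + 1 => join leaf (path m)

/-- The independence polynomial of the tree has no root in `[x, 0]`, that is, it is positive
there. -/
def PosOn (τ : RTree) (x : ℝ) : Prop :=
  ∀ t ∈ Set.Icc x 0, 0 < τ.poly t

variable {s t τ : RTree} {x y : ℝ}

lemma continuous_poly_rootPoly (τ : RTree) : Continuous τ.poly ∧ Continuous τ.rootPoly := by
  induction τ with
  | leaf => exact ⟨by simp only [poly]; fun_prop, by simp only [rootPoly]; fun_prop⟩
  | join s t hs ht =>
    obtain ⟨hs, hs'⟩ := hs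
    obtain ⟨ht, ht'⟩ := ht
    exact ⟨by simp only [poly]; fun_prop, by simp only [rootPoly]; fun_prop⟩

lemma continuous_poly (τ : RTree) : Continuous τ.poly := τ.continuous_poly_rootPoly.1

lemma continuous_rootPoly (τ : RTree) : Continuous τ.rootPoly := τ.continuous_poly_rootPoly.2

lemma rootPoly_zero (τ : RTree) : τ.rootPoly 0 = 0 := by
  induction τ with
  | leaf => rfl
  | join s t hs _ => rw [rootPoly, hs, zero_mul]

lemma poly_zero (τ : RTree) : τ.poly 0 = 1 := by
  induction τ with
  | leaf => simp only [poly, add_zero]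
  | join s t hs ht => rw [poly, hs, ht, rootPoly_zero, zero_mul, one_mul, sub_zero]

lemma PosOn.pos (h : τ.PosOn x) (hx : x ≤ 0) : 0 < τ.poly x :=
  h x (Set.left_mem_Icc.2 hx)

lemma PosOn.mono (h : τ.PosOn x) (hxy : x ≤ y) : τ.PosOn y :=
  fun u hu => h u ⟨hxy.trans hu.1, hu.2⟩

/-- At the last zero of either factor, `poly (join s t)` is the negative of a product of two
nonpositive numbers. -/
lemma PosOn.of_join_of_rootPoly_nonpos (hs : ∀ u ≤ 0, s.PosOn u → s.rootPoly u ≤ 0)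
    (ht : ∀ u ≤ 0, t.PosOn u → t.rootPoly u ≤ 0) (h : (join s t).PosOn x) :
    s.PosOn x ∧ t.PosOn x := by
  suffices hmin : ∀ u ∈ Set.Icc x 0, 0 < min (s.poly u) (t.poly u) from
    ⟨fun u hu => (lt_min_iff.1 (hmin u hu)).1, fun u hu => (lt_min_iff.1 (hmin u hu)).2⟩
  by_contra! hneg
  obtain ⟨z, ⟨hxz, hz0⟩, hz, hpos⟩ := exists_last_zero
    (s.continuous_poly.min t.continuous_poly) (by simp only [poly_zero, min_self, one_pos]) hneg
  have hprod : s.poly z * t.poly z = 0 := by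
    rcases min_choice (s.poly z) (t.poly z) with hm | hm <;> rw [← hm, hz] <;> simp
  have hroot : ∀ {r : RTree}, (∀ u ≤ 0, r.PosOn u → r.rootPoly u ≤ 0) →
      (∀ u ∈ Set.Ioc z 0, 0 < r.poly u) → r.rootPoly z ≤ 0 := fun {r} hr hr' =>
    le_of_forall_mem_Ioc_of_continuous r.continuous_rootPoly continuous_const hz0 fun u hu =>
      hr u hu.2 fun v hv => hr' v ⟨hu.1.trans_le hv.1, hv.2⟩
  have hsz := hroot hs fun u hu => (lt_min_iff.1 (hpos u hu)).1
  have htz := hroot ht fun u hu => (lt_min_iff.1 (hpos u hu)).2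
  have hjoin := h z ⟨hxz, hz0.le⟩
  rw [poly, hprod, zero_sub, neg_pos] at hjoin
  exact hjoin.not_ge (mul_nonneg_of_nonpos_of_nonpos hsz htz)

lemma PosOn.rootPoly_nonpos (h : τ.PosOn x) (hx : x ≤ 0) : τ.rootPoly x ≤ 0 := by
  induction τ generalizing x with
  | leaf => exact hx
  | join s t hs ht =>
    obtain ⟨hs', ht'⟩ := h.of_join_of_rootPoly_nonpos (fun u hu hp => hs hp hu)
      (fun u hu hp => ht hp hu)
    rw [rootPoly]
    exact mul_nonpos_of_nonpos_of_nonneg (hs hs' hx)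
      (sub_nonneg.2 ((ht ht' hx).trans (ht'.pos hx).le))

lemma PosOn.of_join (h : (join s t).PosOn x) : s.PosOn x ∧ t.PosOn x :=
  h.of_join_of_rootPoly_nonpos (fun _ hu hp => hp.rootPoly_nonpos hu)
    (fun _ hu hp => hp.rootPoly_nonpos hu)

lemma rootPoly_path_succ (m : ℕ) (x : ℝ) :
    (path (m + 1)).rootPoly x = x * ((path m).poly x - (path m).rootPoly x) := by
  rw [path, rootPoly, rootPoly]

lemma poly_path_succ (m : ℕ) (x : ℝ) :
    (path (m + 1)).poly x = (path m).poly x + (path (m + 1)).rootPoly x := by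
  rw [rootPoly_path_succ, path, poly, poly, rootPoly]
  ring

lemma poly_path_add (i j : ℕ) (x : ℝ) : (path (i + j + 1)).poly x =
    (path i).poly x * (path j).poly x - (path i).rootPoly x * (path j).rootPoly x := by
  induction i generalizing j with
  | zero => simp only [zero_add, path, poly]
  | succ i ih =>
    rw [show i + 1 + j + 1 = i + (j + 1) + 1 by ring, ih, poly_path_succ j, poly_path_succ i,
      rootPoly_path_succ j, rootPoly_path_succ i]
    ring

lemma PosOn.path_of_le {m n : ℕ} (h : (path n).PosOn x) (hmn : m ≤ n) : (path m).PosOn x := by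
  induction hmn using Nat.decreasingInduction with
  | self => exact h
  | of_succ k _ ih => exact ih.of_join.2

lemma poly_path_add_le {i j : ℕ} (hi : (path i).PosOn x) (hj : (path j).PosOn x) (hx : x ≤ 0) :
    (path (i + j)).poly x ≤ ((path i).poly x - (path i).rootPoly x) * (path j).poly x := by
  cases i with
  | zero => simp [path, poly, rootPoly]
  | succ i =>
    have hi' := (hi.path_of_le i.le_succ).rootPoly_nonpos hx
    rw [show i + 1 + j = i + j + 1 by ring, poly_path_add, poly_path_succ i]
    nlinarith [mul_nonneg_of_nonpos_of_nonpos hi' (hj.rootPoly_nonpos hx)]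

/-- The rooted tree `s` is dominated by the rooted tree `t` at `x`: both the independence
polynomial and the ratio `rootPoly / poly` of `s` are at most those of `t`. -/
def DominatedAt (s t : RTree) (x : ℝ) : Prop :=
  s.poly x ≤ t.poly x ∧ s.rootPoly x * t.poly x ≤ t.rootPoly x * s.poly x

section Join

variable {s' t' : RTree} (hs : s.DominatedAt s' x) (ht : t.DominatedAt t' x)
  (hsx : s.PosOn x) (htx : t.PosOn x) (hs'x : s'.PosOn x) (ht'x : t'.PosOn x) (hx : x ≤ 0)

include hs ht hsx htx hs'x ht'x hx

lemma DominatedAt.mul_rootPoly_le :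
    s'.rootPoly x * t'.rootPoly x * (s.poly x * t.poly x) ≤
      s.rootPoly x * t.rootPoly x * (s'.poly x * t'.poly x) := by
  have h : (-(s'.rootPoly x * s.poly x)) * (-(t'.rootPoly x * t.poly x)) ≤
      (-(s.rootPoly x * s'.poly x)) * (-(t.rootPoly x * t'.poly x)) :=
    mul_le_mul (neg_le_neg hs.2) (neg_le_neg ht.2)
      (neg_nonneg.2 (mul_nonpos_of_nonpos_of_nonneg (ht'x.rootPoly_nonpos hx) (htx.pos hx).le))
      (neg_nonneg.2 (mul_nonpos_of_nonpos_of_nonneg (hsx.rootPoly_nonpos hx) (hs'x.pos hx).le))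
  linarith

lemma DominatedAt.poly_join_le (h : 0 < (join s t).poly x) :
    (join s t).poly x ≤ (join s' t').poly x := by
  have hratio := hs.mul_rootPoly_le ht hsx htx hs'x ht'x hx
  have hprod : s.poly x * t.poly x ≤ s'.poly x * t'.poly x :=
    mul_le_mul hs.1 ht.1 (htx.pos hx).le (hs'x.pos hx).le
  have hpos : 0 < s.poly x * t.poly x := mul_pos (hsx.pos hx) (htx.pos hx)
  have hpos' : 0 < s'.poly x * t'.poly x := mul_pos (hs'x.pos hx) (ht'x.pos hx)
  have hcross : (join s t).poly x * (s'.poly x * t'.poly x) ≤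
      s.poly x * t.poly x * (join s' t').poly x := by
    simp only [poly]
    linarith
  have hjoin : 0 < (join s' t').poly x :=
    pos_of_mul_pos_right ((mul_pos h hpos').trans_le hcross) hpos.le
  refine le_of_mul_le_mul_right (hcross.trans ?_) hpos'
  rw [mul_comm]
  exact mul_le_mul_of_nonneg_left hprod hjoin.le

lemma DominatedAt.join_cross_le :
    (s'.poly x - s'.rootPoly x) * t'.poly x * (join s t).poly x ≤
      (s.poly x - s.rootPoly x) * t.poly x * (join s' t').poly x := by
  have hratio := hs.mul_rootPoly_le ht hsx htx hs'x ht'x hx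
  have hfst : 0 ≤ (s'.rootPoly x * s.poly x - s.rootPoly x * s'.poly x) *
      (t.poly x * t'.poly x) :=
    mul_nonneg (sub_nonneg.2 hs.2) (mul_pos (htx.pos hx) (ht'x.pos hx)).le
  have hsnd : 0 ≤ (t'.rootPoly x * t.poly x - t.rootPoly x * t'.poly x) *
      (s.rootPoly x * s'.rootPoly x) :=
    mul_nonneg (sub_nonneg.2 ht.2)
      (mul_nonneg_of_nonpos_of_nonpos (hsx.rootPoly_nonpos hx) (hs'x.rootPoly_nonpos hx))
  simp only [poly]
  linarith

end Join

/-- Among the rooted trees of given order the path rooted at an end is the largest: a tree built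
from `s` and `t` is compared with the path made of the two paths that dominate `s` and `t`. -/
lemma PosOn.dominatedAt_path (h : τ.PosOn x) (hx : x ≤ 0) :
    τ.DominatedAt (path τ.rank) x ∧ (path τ.rank).PosOn x := by
  induction τ generalizing x with
  | leaf => exact ⟨⟨le_rfl, le_rfl⟩, h⟩
  | join s t ihs iht =>
    have hpoly : ∀ u ∈ Set.Icc x 0, (join s t).poly u ≤ (path (s.rank + t.rank + 1)).poly u := by
      intro u hu
      obtain ⟨hs, ht⟩ := (h.mono hu.1).of_join
      obtain ⟨hsu, hs'⟩ := ihs hs hu.2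
      obtain ⟨htu, ht'⟩ := iht ht hu.2
      rw [poly_path_add]
      exact hsu.poly_join_le htu hs ht hs' ht' hu.2 (h u hu)
    obtain ⟨hs, ht⟩ := h.of_join
    obtain ⟨hsx, hs'⟩ := ihs hs hx
    obtain ⟨htx, ht'⟩ := iht ht hx
    have hcross : (path (s.rank + t.rank)).poly x * (join s t).poly x ≤
        ((join s t).poly x - (join s t).rootPoly x) * (path (s.rank + t.rank + 1)).poly x := calc
      _ ≤ _ := mul_le_mul_of_nonneg_right (poly_path_add_le hs' ht' hx) (h.pos hx).le
      _ ≤ _ := hsx.join_cross_le htx hs ht hs' ht' hx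
      _ = _ := by
        rw [poly_path_add]
        simp only [poly, rootPoly]
        ring
    refine ⟨⟨hpoly x (Set.left_mem_Icc.2 hx), ?_⟩, fun u hu => (h u hu).trans_le (hpoly u hu)⟩
    rw [rank]
    linarith [poly_path_succ (s.rank + t.rank) x, mul_comm ((path (s.rank + t.rank + 1)).poly x)
      ((join s t).poly x), congrArg (· * (join s t).poly x) (poly_path_succ (s.rank + t.rank) x)]

end RTree

section Subgraphs

variable {V : Type*} {G : SimpleGraph V} {A B S s t : Finset V} {u v r : V}

lemma isIndepFinset_empty : IsIndepFinset G ∅ := by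
  simp [IsIndepFinset]

/-- There is no edge between the disjoint vertex sets `A` and `B`. -/
structure Separated (G : SimpleGraph V) (A B : Finset V) : Prop where
  disjoint : Disjoint A B
  not_adj : ∀ a ∈ A, ∀ b ∈ B, ¬ G.Adj a b

lemma Separated.mono (h : Separated G A B) {A' B' : Finset V} (hA : A' ⊆ A) (hB : B' ⊆ B) :
    Separated G A' B' :=
  ⟨h.disjoint.mono hA hB, fun a ha b hb => h.not_adj a (hA ha) b (hB hb)⟩

/-- The edge `u v` is the only one between the disjoint vertex sets `A ∋ u` and `B ∋ v`. -/
structure Bridge (G : SimpleGraph V) (A B : Finset V) (u v : V) : Prop where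
  disjoint : Disjoint A B
  left_mem : u ∈ A
  right_mem : v ∈ B
  adj_iff : ∀ a ∈ A, ∀ b ∈ B, G.Adj a b ↔ a = u ∧ b = v

lemma Bridge.symm (h : Bridge G A B u v) : Bridge G B A v u :=
  ⟨h.disjoint.symm, h.right_mem, h.left_mem, fun b hb a ha => by
    rw [G.adj_comm, h.adj_iff a ha b hb, and_comm]⟩

lemma Bridge.adj (h : Bridge G A B u v) : G.Adj u v :=
  (h.adj_iff u h.left_mem v h.right_mem).2 ⟨rfl, rfl⟩

lemma Bridge.left_notMem (h : Bridge G A B u v) : u ∉ B :=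
  Finset.disjoint_left.1 h.disjoint h.left_mem

lemma Bridge.mono (h : Bridge G A B u v) {A' B' : Finset V} (hA : A' ⊆ A) (hB : B' ⊆ B)
    (hu : u ∈ A') (hv : v ∈ B') : Bridge G A' B' u v :=
  ⟨h.disjoint.mono hA hB, hu, hv, fun a ha b hb => h.adj_iff a (hA ha) b (hB hb)⟩

variable [DecidableEq V]

open Classical in
/-- The vertices of `S` outside the closed neighbourhood of `r`. -/
noncomputable def outside (G : SimpleGraph V) (S : Finset V) (r : V) : Finset V :=
  {v ∈ S.erase r | ¬ G.Adj r v}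

lemma mem_outside : v ∈ outside G S r ↔ v ∈ S ∧ v ≠ r ∧ ¬ G.Adj r v := by
  simp only [outside, Finset.mem_filter, Finset.mem_erase]
  tauto

lemma outside_subset_erase : outside G S r ⊆ S.erase r := fun _ hv =>
  Finset.mem_erase.2 ⟨(mem_outside.1 hv).2.1, (mem_outside.1 hv).1⟩

lemma outside_subset : outside G S r ⊆ S :=
  outside_subset_erase.trans (Finset.erase_subset _ _)

lemma outside_singleton : outside G {v} v = ∅ := by
  rw [← Finset.subset_empty, ← Finset.erase_singleton v]
  exact outside_subset_erase

lemma isIndepFinset_insert :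
    IsIndepFinset G (insert v s) ↔ IsIndepFinset G s ∧ ∀ u ∈ s, ¬ G.Adj v u := by
  simp only [IsIndepFinset, Finset.forall_mem_insert, SimpleGraph.irrefl, not_false_eq_true,
    true_and, forall_and, G.adj_comm _ v]
  tauto

lemma Separated.isIndepFinset_union (h : Separated G A B) (hs : s ⊆ A) (ht : t ⊆ B)
    (hsi : IsIndepFinset G s) (hti : IsIndepFinset G t) : IsIndepFinset G (s ∪ t) := by
  intro a ha b hb hab
  rcases Finset.mem_union.1 ha with ha | ha <;> rcases Finset.mem_union.1 hb with hb | hb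
  · exact hsi a ha b hb hab
  · exact h.not_adj a (hs ha) b (ht hb) hab
  · exact h.not_adj b (hs hb) a (ht ha) hab.symm
  · exact hti a ha b hb hab

lemma Separated.outside_union (h : Separated G A B) (hv : v ∈ A) :
    outside G (A ∪ B) v = outside G A v ∪ B := by
  ext w
  simp only [mem_outside, Finset.mem_union]
  have hne : w ∈ B → w ≠ v := fun hw e => Finset.disjoint_left.1 h.disjoint hv (e ▸ hw)
  have := h.not_adj v hv w
  tauto

lemma erase_union_of_disjoint (h : Disjoint A B) (hv : v ∈ A) :
    (A ∪ B).erase v = A.erase v ∪ B := by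
  rw [Finset.erase_union_distrib, Finset.erase_eq_of_notMem (Finset.disjoint_left.1 h hv)]

lemma Bridge.outside_union (h : Bridge G A B u v) :
    outside G (A ∪ B) u = outside G A u ∪ B.erase v := by
  ext w
  simp only [mem_outside, Finset.mem_union, Finset.mem_erase]
  have hne : w ∈ B → w ≠ u := fun hw e => h.left_notMem (e ▸ hw)
  have := h.adj_iff u h.left_mem w
  tauto

lemma Bridge.separated_erase (h : Bridge G A B u v) : Separated G (A.erase u) B :=
  ⟨h.disjoint.mono_left (Finset.erase_subset _ _), fun a ha b hb hab =>
    Finset.ne_of_mem_erase ha ((h.adj_iff a (Finset.mem_of_mem_erase ha) b hb).1 hab).1⟩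

lemma Bridge.separated_outside (h : Bridge G A B u v) :
    Separated G (outside G A u) (B.erase v) :=
  h.separated_erase.mono outside_subset_erase (Finset.erase_subset _ _)

end Subgraphs

section IndepSum

variable {V : Type*} {G : SimpleGraph V} {A B S T : Finset V} {r q u v w x₁ x₂ : V}
  {σ τ : RTree} {a b c : ℕ} {x : ℝ}

open Classical in
/-- The independence polynomial of the subgraph of `G` induced on `S`, evaluated at `x`. -/
noncomputable def indepSum (G : SimpleGraph V) (S : Finset V) (x : ℝ) : ℝ :=
  ∑ s ∈ S.powerset, if IsIndepFinset G s then x ^ s.card else 0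

lemma eval_indepPoly [Fintype V] (G : SimpleGraph V) (x : ℝ) :
    (indepPoly G).eval x = indepSum G Finset.univ x := by
  simp only [indepPoly, indepSum, Polynomial.eval_finsetSum, Finset.powerset_univ]
  refine Finset.sum_congr rfl fun s _ => ?_
  split_ifs
  · rw [Polynomial.eval_pow, Polynomial.eval_X]
  · rw [Polynomial.eval_zero]

lemma indepSum_empty (G : SimpleGraph V) (x : ℝ) : indepSum G ∅ x = 1 := by
  simp [indepSum, isIndepFinset_empty]

variable [DecidableEq V]

lemma indepSum_eq_erase_add_outside (hv : v ∈ S) (x : ℝ) :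
    indepSum G S x = indepSum G (S.erase v) x + x * indepSum G (outside G S v) x := by
  conv_lhs => rw [← Finset.insert_erase hv]
  rw [indepSum, Finset.sum_powerset_insert (Finset.notMem_erase v S)]
  congr 1
  rw [indepSum, Finset.mul_sum]
  refine (Finset.sum_subset_zero_on_sdiff (Finset.powerset_mono.2 outside_subset_erase) ?_ ?_).symm
  · intro t ht
    rw [Finset.mem_sdiff, Finset.mem_powerset, Finset.mem_powerset] at ht
    refine if_neg fun hind => ht.2 fun u hu => ?_
    have hu' := Finset.mem_erase.1 (ht.1 hu)
    exact mem_outside.2 ⟨hu'.2, hu'.1, (isIndepFinset_insert.1 hind).2 u hu⟩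
  · intro t ht
    rw [Finset.mem_powerset] at ht
    have hvt : v ∉ t := fun h => (mem_outside.1 (ht h)).2.1 rfl
    have hind : IsIndepFinset G (insert v t) ↔ IsIndepFinset G t := by
      rw [isIndepFinset_insert, and_iff_left fun u hu => (mem_outside.1 (ht hu)).2.2]
    rw [Finset.card_insert_of_notMem hvt]
    split_ifs
    · rw [pow_succ']
    · tauto
    · tauto
    · rw [mul_zero]

lemma Separated.indepSum_union (h : Separated G A B) (x : ℝ) :
    indepSum G (A ∪ B) x = indepSum G A x * indepSum G B x := by
  induction A using Finset.strongInduction with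
  | H A ih =>
    rcases A.eq_empty_or_nonempty with rfl | ⟨v, hv⟩
    · rw [Finset.empty_union, indepSum_empty, one_mul]
    · have herase := ih _ (Finset.erase_ssubset hv) (h.mono (Finset.erase_subset _ _) subset_rfl)
      have houtside := ih (outside G A v)
        (outside_subset_erase.trans_ssubset (Finset.erase_ssubset hv))
        (h.mono outside_subset subset_rfl)
      rw [indepSum_eq_erase_add_outside (Finset.mem_union_left _ hv),
        erase_union_of_disjoint h.disjoint hv, h.outside_union hv, herase, houtside,
        indepSum_eq_erase_add_outside hv]
      ring

omit [DecidableEq V] in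
lemma indepSum_singleton (v : V) (x : ℝ) : indepSum G {v} x = 1 + x := by
  classical
  rw [indepSum_eq_erase_add_outside (Finset.mem_singleton_self v), outside_singleton,
    Finset.erase_singleton, indepSum_empty, mul_one]

/-- After the substitution `x ↦ x / (1 + x)`, and up to the factors `(1 + x) ^ a` and
`(1 + x) ^ b`, the rooted tree `τ` counts the independent subsets of `S` that avoid,
respectively contain, the vertex `r`. -/
def TreeRep (G : SimpleGraph V) (S : Finset V) (r : V) (τ : RTree) (a b : ℕ) : Prop :=
  ∀ x : ℝ, -1 < x →
    indepSum G (S.erase r) x =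
      (1 + x) ^ a * (τ.poly (x / (1 + x)) - τ.rootPoly (x / (1 + x))) ∧
    x * indepSum G (outside G S r) x = (1 + x) ^ b * τ.rootPoly (x / (1 + x))

lemma TreeRep.indepSum_eq (h : TreeRep G S r τ a a) (hr : r ∈ S) (hx : -1 < x) :
    indepSum G S x = (1 + x) ^ a * τ.poly (x / (1 + x)) := by
  rw [indepSum_eq_erase_add_outside hr, (h x hx).1, (h x hx).2]
  ring

lemma TreeRep.singleton (r : V) : TreeRep G {r} r .leaf 0 1 := by
  intro x hx
  have hx' : 1 + x ≠ 0 := by linarith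
  rw [outside_singleton, Finset.erase_singleton, indepSum_empty, RTree.poly, RTree.rootPoly]
  constructor
  · ring
  · field_simp

lemma TreeRep.addLeaf (h : TreeRep G A r τ a b) (hb : Bridge G A {v} r v) :
    TreeRep G (A ∪ {v}) r τ (a + 1) b := by
  intro x hx
  rw [erase_union_of_disjoint hb.disjoint hb.left_mem, hb.outside_union, Finset.erase_singleton,
    Finset.union_empty, hb.separated_erase.indepSum_union, indepSum_singleton, (h x hx).1]
  exact ⟨by ring, (h x hx).2⟩

lemma TreeRep.join (hA : TreeRep G A r σ a b) (hB : TreeRep G B q τ c c) (h : Bridge G A B r q) :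
    TreeRep G (A ∪ B) r (.join σ τ) (a + c) (b + c) := by
  intro x hx
  rw [erase_union_of_disjoint h.disjoint h.left_mem, h.outside_union,
    h.separated_erase.indepSum_union, h.separated_outside.indepSum_union,
    hB.indepSum_eq h.right_mem hx, (hA x hx).1, (hB x hx).1, ← mul_assoc x, (hA x hx).2,
    RTree.poly, RTree.rootPoly]
  constructor <;> ring

/-- In a triangle `w v u` whose vertex `u` carries the tree, the vertex `v` is absorbed by the
substitution. -/
lemma TreeRep.triangle (hA : TreeRep G A u τ a (a + 1)) (h : Bridge G A {v} u v)
    (hw : w ∉ A ∪ {v}) (hadj : ∀ y ∈ A ∪ {v}, G.Adj w y ↔ y = u ∨ y = v) :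
    TreeRep G (insert w (A ∪ {v})) w (.join .leaf τ) (a + 1) (a + 1) := by
  intro x hx
  have hx' : 1 + x ≠ 0 := by linarith
  have houtside : outside G (insert w (A ∪ {v})) w = A.erase u := by
    ext y
    have hwy : y ∈ A ∪ {v} → y ≠ w := fun hy e => hw (e ▸ hy)
    have huy := hadj y
    have hvA := h.symm.left_notMem
    simp only [mem_outside, Finset.mem_insert, Finset.mem_erase, Finset.mem_union,
      Finset.mem_singleton] at hwy huy ⊢
    grind
  rw [Finset.erase_insert hw, houtside,
    (hA.addLeaf h).indepSum_eq (Finset.mem_union_left _ h.left_mem) hx, (hA x hx).1]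
  simp only [RTree.poly, RTree.rootPoly]
  constructor
  · ring
  · field_simp
    ring

/-- In a pentagon `w v u x₂ x₁` whose vertex `u` carries the tree, the vertices `x₁` and `x₂` are
absorbed by the substitution. -/
lemma TreeRep.pentagon (hA : TreeRep G A u τ a (a + 1)) (h : Bridge G A {v} u v)
    (h' : Bridge G (A ∪ {v}) ({x₂} ∪ {x₁}) u x₂) (hx₁ : Bridge G {x₂} {x₁} x₂ x₁)
    (hw : w ∉ A ∪ {v} ∪ ({x₂} ∪ {x₁}))
    (hadj : ∀ y ∈ A ∪ {v} ∪ ({x₂} ∪ {x₁}), G.Adj w y ↔ y = v ∨ y = x₁) :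
    TreeRep G (insert w (A ∪ {v} ∪ ({x₂} ∪ {x₁}))) w (.join .leaf (.join .leaf τ))
      (a + 2) (a + 2) := by
  intro x hx
  have hx' : 1 + x ≠ 0 := by linarith
  have hx₂ : Bridge G A {x₂} u x₂ :=
    h'.mono Finset.subset_union_left Finset.subset_union_left h.left_mem
      (Finset.mem_singleton_self _)
  have houtside : outside G (insert w (A ∪ {v} ∪ ({x₂} ∪ {x₁}))) w = A ∪ {x₂} := by
    ext y
    have hwy : y ∈ A ∪ {v} ∪ ({x₂} ∪ {x₁}) → y ≠ w := fun hy e => hw (e ▸ hy)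
    have hvy := hadj y
    have hvA := h.symm.left_notMem
    have hdisj : y ∈ A ∪ {v} → y ∉ _ := fun hy => Finset.disjoint_left.1 h'.disjoint hy
    have hdisj' : v ∈ A ∪ {v} → v ∉ _ := fun hv => Finset.disjoint_left.1 h'.disjoint hv
    have hne := hx₁.adj.ne
    simp only [mem_outside, Finset.mem_insert, Finset.mem_union, Finset.mem_singleton]
      at hwy hvy hdisj hdisj' ⊢
    grind
  have hB : TreeRep G ({x₂} ∪ {x₁}) x₂ .leaf 1 1 := (TreeRep.singleton x₂).addLeaf hx₁
  rw [Finset.erase_insert hw, houtside,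
    ((hA.addLeaf h).join hB h').indepSum_eq (Finset.mem_union_left _ h'.left_mem) hx,
    (hA.addLeaf hx₂).indepSum_eq (Finset.mem_union_left _ h.left_mem) hx]
  simp only [RTree.poly, RTree.rootPoly]
  constructor
  · ring
  · field_simp
    ring

end IndepSum

section WellCoveredOn

variable {V : Type*} {G : SimpleGraph V} {A B I J M N S T : Finset V} {k l e : ℕ} {b b' u v w : V}

/-- `M` is a maximal independent set of the subgraph of `G` induced on `S`. -/
structure MaxIndepIn (G : SimpleGraph V) (S M : Finset V) : Prop where
  subset : M ⊆ S
  indep : IsIndepFinset G M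
  exists_adj : ∀ v ∈ S, v ∉ M → ∃ u ∈ M, G.Adj u v

/-- All maximal independent sets of the subgraph of `G` induced on `S` have size `k`. -/
def WellCoveredOn (G : SimpleGraph V) (S : Finset V) (k : ℕ) : Prop :=
  ∀ M, MaxIndepIn G S M → M.card = k

lemma exists_maxIndepIn (hI : IsIndepFinset G I) (hIS : I ⊆ S) :
    ∃ M, I ⊆ M ∧ MaxIndepIn G S M := by
  classical
  obtain ⟨M, hIM, hM⟩ := (S.powerset.filter (IsIndepFinset G)).exists_le_maximal
    (Finset.mem_filter.2 ⟨Finset.mem_powerset.2 hIS, hI⟩)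
  obtain ⟨hMS, hMi⟩ := Finset.mem_filter.1 hM.1
  rw [Finset.mem_powerset] at hMS
  refine ⟨M, hIM, hMS, hMi, fun v hv hvM => ?_⟩
  by_contra! hcon
  have hins : insert v M ∈ S.powerset.filter (IsIndepFinset G) :=
    Finset.mem_filter.2 ⟨Finset.mem_powerset.2 (Finset.insert_subset hv hMS),
      isIndepFinset_insert.2 ⟨hMi, fun u hu huv => hcon u hu huv.symm⟩⟩
  exact hvM (hM.2 hins (Finset.subset_insert v M) (Finset.mem_insert_self v M))

lemma exists_maxIndepIn_mem (hv : v ∈ S) : ∃ M, v ∈ M ∧ MaxIndepIn G S M := by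
  obtain ⟨M, hvM, hM⟩ := exists_maxIndepIn (G := G) (I := {v}) (by simp [IsIndepFinset])
    (Finset.singleton_subset_iff.2 hv)
  exact ⟨M, Finset.singleton_subset_iff.1 hvM, hM⟩

lemma WellCovered.exists_wellCoveredOn [Fintype V] (h : WellCovered G) :
    ∃ k, WellCoveredOn G Finset.univ k := by
  classical
  have hmax : ∀ {M}, MaxIndepIn G Finset.univ M → ∀ v ∉ M, ¬ IsIndepFinset G (insert v M) := by
    intro M hM v hv hins
    obtain ⟨u, hu, huv⟩ := hM.exists_adj v (Finset.mem_univ v) hv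
    exact hins u (Finset.mem_insert_of_mem hu) v (Finset.mem_insert_self v M) huv
  obtain ⟨M₀, -, hM₀⟩ := exists_maxIndepIn (G := G) isIndepFinset_empty
    (Finset.empty_subset Finset.univ)
  exact ⟨M₀.card, fun M hM => h M M₀ hM.indep (hmax hM) hM₀.indep (hmax hM₀)⟩

lemma WellCoveredOn.le_of_subset (h : WellCoveredOn G S k) (hT : WellCoveredOn G T l)
    (hTS : T ⊆ S) : l ≤ k := by
  obtain ⟨N, -, hN⟩ := exists_maxIndepIn (G := G) isIndepFinset_empty (Finset.empty_subset T)
  obtain ⟨M, hNM, hM⟩ := exists_maxIndepIn hN.indep (hN.subset.trans hTS)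
  rw [← hT N hN, ← h M hM]
  exact Finset.card_le_card hNM

variable [DecidableEq V]

lemma MaxIndepIn.union (h : Separated G A B) (hM : MaxIndepIn G A M) (hN : MaxIndepIn G B N) :
    MaxIndepIn G (A ∪ B) (M ∪ N) := by
  refine ⟨Finset.union_subset_union hM.subset hN.subset,
    h.isIndepFinset_union hM.subset hN.subset hM.indep hN.indep, fun v hv hvMN => ?_⟩
  rw [Finset.mem_union, not_or] at hvMN
  rcases Finset.mem_union.1 hv with hv | hv
  · obtain ⟨u, hu, huv⟩ := hM.exists_adj v hv hvMN.1
    exact ⟨u, Finset.mem_union_left _ hu, huv⟩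
  · obtain ⟨u, hu, huv⟩ := hN.exists_adj v hv hvMN.2
    exact ⟨u, Finset.mem_union_right _ hu, huv⟩

lemma MaxIndepIn.of_erase (hM : MaxIndepIn G (S.erase w) M) (hu : u ∈ M) (huw : G.Adj u w) :
    MaxIndepIn G S M := by
  refine ⟨hM.subset.trans (Finset.erase_subset _ _), hM.indep, fun v hv hvM => ?_⟩
  by_cases hvw : v = w
  · exact ⟨u, hu, hvw ▸ huw⟩
  · exact hM.exists_adj v (Finset.mem_erase.2 ⟨hvw, hv⟩) hvM

lemma Separated.exists_wellCoveredOn (h : Separated G A B) (hk : WellCoveredOn G (A ∪ B) k) :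
    ∃ k₁ k₂, WellCoveredOn G A k₁ ∧ WellCoveredOn G B k₂ ∧ k₁ + k₂ = k := by
  obtain ⟨M₀, -, hM₀⟩ := exists_maxIndepIn (G := G) isIndepFinset_empty (Finset.empty_subset A)
  obtain ⟨N₀, -, hN₀⟩ := exists_maxIndepIn (G := G) isIndepFinset_empty (Finset.empty_subset B)
  have hadd : ∀ M N, MaxIndepIn G A M → MaxIndepIn G B N → M.card + N.card = k := by
    intro M N hM hN
    rw [← Finset.card_union_of_disjoint (h.disjoint.mono hM.subset hN.subset)]
    exact hk _ (hM.union h hN)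
  have h₀ := hadd M₀ N₀ hM₀ hN₀
  exact ⟨M₀.card, N₀.card,
    fun M hM => by have := hadd M N₀ hM hN₀; omega,
    fun N hN => by have := hadd M₀ N hM₀ hN; omega, h₀⟩

lemma MaxIndepIn.union_of_mem_iff (hI : IsIndepFinset G I) (hIS : I ⊆ S) (hM : MaxIndepIn G T M)
    (hT : ∀ v, v ∈ T ↔ v ∈ S ∧ ∀ u ∈ I, u ≠ v ∧ ¬ G.Adj u v) :
    MaxIndepIn G S (I ∪ M) ∧ (I ∪ M).card = I.card + M.card := by
  have hsep : ∀ u ∈ I, ∀ v ∈ M, u ≠ v ∧ ¬ G.Adj u v := fun u hu v hv =>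
    ((hT v).1 (hM.subset hv)).2 u hu
  have hsep' : Separated G I M :=
    ⟨Finset.disjoint_iff_ne.2 fun u hu v hv => (hsep u hu v hv).1,
      fun u hu v hv => (hsep u hu v hv).2⟩
  refine ⟨⟨Finset.union_subset hIS fun v hv => ((hT v).1 (hM.subset hv)).1,
    hsep'.isIndepFinset_union subset_rfl subset_rfl hI hM.indep, fun v hv hvIM => ?_⟩,
    Finset.card_union_of_disjoint hsep'.disjoint⟩
  rw [Finset.mem_union, not_or] at hvIM
  by_cases hvT : v ∈ T
  · obtain ⟨u, hu, huv⟩ := hM.exists_adj v hvT hvIM.2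
    exact ⟨u, Finset.mem_union_right _ hu, huv⟩
  · rw [hT] at hvT
    push Not at hvT
    obtain ⟨u, hu, huv⟩ := hvT hv
    exact ⟨u, Finset.mem_union_left _ hu, huv fun e => hvIM.1 (e ▸ hu)⟩

omit [DecidableEq V] in
/-- Two independent sets with the same closed neighbourhood are completed to maximal independent
sets by the same vertices. -/
lemma WellCoveredOn.card_eq (h : WellCoveredOn G S k) (hI : IsIndepFinset G I)
    (hJ : IsIndepFinset G J) (hIS : I ⊆ S) (hJS : J ⊆ S)
    (hIJ : ∀ v ∈ S, (∃ u ∈ I, u = v ∨ G.Adj u v) ↔ ∃ u ∈ J, u = v ∨ G.Adj u v) :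
    I.card = J.card := by
  classical
  obtain ⟨M, -, hM⟩ := exists_maxIndepIn (G := G) isIndepFinset_empty
    (Finset.empty_subset {v ∈ S | ∀ u ∈ I, u ≠ v ∧ ¬ G.Adj u v})
  obtain ⟨hIM, hIcard⟩ := hM.union_of_mem_iff hI hIS fun v => Finset.mem_filter
  obtain ⟨hJM, hJcard⟩ := hM.union_of_mem_iff hJ hJS fun v => by
    rw [Finset.mem_filter, and_congr_right_iff]
    intro hv
    simpa only [not_exists, not_and, not_or] using not_congr (hIJ v hv)
  have := h _ hIM
  have := h _ hJM
  omega

/-- `G[S] - w` and `G[S] - N[w]` are well-covered. For `e = 0` their independence numbers differ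
by one, as for a vertex `w` with a pendant neighbour in a well-covered graph; for `e = 1` they
agree, which is what remains at `w` once such a pendant neighbour is removed. -/
def WellCoveredAt (G : SimpleGraph V) (S : Finset V) (w : V) (e : ℕ) : Prop :=
  ∃ k l, WellCoveredOn G (S.erase w) k ∧ WellCoveredOn G (outside G S w) l ∧ l + 1 = k + e

lemma WellCoveredOn.wellCoveredAt (h : WellCoveredOn G S k)
    (h' : WellCoveredOn G (S.erase b) k) (hb : b ∈ S) : WellCoveredAt G S b 0 := by
  have hcard : ∀ M, MaxIndepIn G (outside G S b) M → M.card + 1 = k := by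
    intro M hM
    obtain ⟨hbM, hbcard⟩ := hM.union_of_mem_iff (I := {b}) (by simp [IsIndepFinset])
      (Finset.singleton_subset_iff.2 hb) fun v => by simp [mem_outside, ne_comm]
    rw [← h _ hbM, hbcard, Finset.card_singleton, add_comm]
  obtain ⟨M, -, hM⟩ := exists_maxIndepIn (G := G) isIndepFinset_empty
    (Finset.empty_subset (outside G S b))
  exact ⟨k, M.card, h', fun N hN => Nat.add_right_cancel ((hcard N hN).trans (hcard M hM).symm),
    hcard M hM⟩

lemma WellCoveredOn.wellCoveredAt_of_pendant (hk : WellCoveredOn G (A ∪ {v}) k)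
    (h : Bridge G A {v} w v) : WellCoveredAt G (A ∪ {v}) w 0 := by
  refine hk.wellCoveredAt (fun M hM => ?_) (Finset.mem_union_left _ h.left_mem)
  have hvM : v ∈ M := by
    by_contra hvM
    rw [erase_union_of_disjoint h.disjoint h.left_mem] at hM
    obtain ⟨u, hu, huv⟩ := hM.exists_adj v (by simp) hvM
    rcases Finset.mem_union.1 (hM.subset hu) with hu | hu
    · exact h.separated_erase.not_adj u hu v (Finset.mem_singleton_self v) huv
    · exact huv.ne (Finset.mem_singleton.1 hu)
  exact hk M (hM.of_erase hvM h.adj.symm)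

lemma WellCoveredAt.exists_of_bridge (hw : WellCoveredAt G (A ∪ B) w e) (h : Bridge G A B w b) :
    ∃ k₁ k₂ l₁ l₂, WellCoveredOn G (A.erase w) k₁ ∧ WellCoveredOn G B k₂ ∧
      WellCoveredOn G (outside G A w) l₁ ∧ WellCoveredOn G (B.erase b) l₂ ∧
      l₁ ≤ k₁ ∧ l₁ + l₂ + 1 = k₁ + k₂ + e := by
  obtain ⟨k, l, hk, hl, hkl⟩ := hw
  rw [erase_union_of_disjoint h.disjoint h.left_mem] at hk
  rw [h.outside_union] at hl
  obtain ⟨k₁, k₂, hk₁, hk₂, rfl⟩ := h.separated_erase.exists_wellCoveredOn hk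
  obtain ⟨l₁, l₂, hl₁, hl₂, rfl⟩ := h.separated_outside.exists_wellCoveredOn hl
  exact ⟨k₁, k₂, l₁, l₂, hk₁, hk₂, hl₁, hl₂, hk₁.le_of_subset hl₁ outside_subset_erase, hkl⟩

lemma WellCoveredAt.of_pendant (hw : WellCoveredAt G (A ∪ {b}) w e) (h : Bridge G A {b} w b) :
    e = 0 ∧ WellCoveredAt G A w 1 := by
  obtain ⟨k₁, k₂, l₁, l₂, hk₁, hk₂, hl₁, hl₂, hle, hkl⟩ := hw.exists_of_bridge h
  obtain rfl : 1 = k₂ := hk₂ {b} ⟨subset_rfl, by simp [IsIndepFinset], fun v hv hv' =>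
    absurd hv hv'⟩
  obtain rfl : 0 = l₂ := hl₂ ∅ ⟨Finset.empty_subset _, isIndepFinset_empty, fun v hv => by
    simp at hv⟩
  exact ⟨by omega, k₁, l₁, hk₁, hl₁, by omega⟩

lemma WellCoveredAt.of_bridge (hw : WellCoveredAt G (A ∪ B) w e) (h : Bridge G A B w b)
    (hb' : b' ∈ B) (hbb' : G.Adj b b') : WellCoveredAt G A w e ∧ WellCoveredAt G B b 0 := by
  obtain ⟨k₁, k₂, l₁, l₂, hk₁, hk₂, hl₁, hl₂, -, hkl⟩ := hw.exists_of_bridge h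
  obtain ⟨M, hb'M, hM⟩ := exists_maxIndepIn_mem (G := G)
    (Finset.mem_erase.2 ⟨hbb'.ne.symm, hb'⟩)
  obtain rfl : k₂ = l₂ := (hk₂ M (hM.of_erase hb'M hbb'.symm)).symm.trans (hl₂ M hM)
  exact ⟨⟨k₁, l₁, hk₁, hl₁, by omega⟩, hk₂.wellCoveredAt hl₂ h.right_mem⟩

lemma WellCoveredAt.le_one (hw : WellCoveredAt G S w e) : e ≤ 1 := by
  obtain ⟨k, l, hk, hl, hkl⟩ := hw
  have := hk.le_of_subset hl outside_subset_erase
  omega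

lemma WellCoveredAt.eq_one_of_singleton (hw : WellCoveredAt G {w} w e) : e = 1 := by
  obtain ⟨k, l, hk, hl, hkl⟩ := hw
  rw [Finset.erase_singleton] at hk
  rw [outside_singleton] at hl
  have hmax : MaxIndepIn G ∅ ∅ := ⟨subset_rfl, isIndepFinset_empty, fun v hv => by simp at hv⟩
  have := hk ∅ hmax
  have := hl ∅ hmax
  omega

/-- A maximal independent set of `G[S] - N[w]` containing `I` becomes one of `G[S] - w` when `J` is
added. -/
lemma WellCoveredAt.card_eq_one (hw : WellCoveredAt G S w 0) (hI : IsIndepFinset G I)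
    (hIS : I ⊆ outside G S w) (hJ : IsIndepFinset G J) (hJS : J ⊆ S) (hwJ : ∀ v ∈ J, G.Adj w v)
    (hIJ : ∀ u ∈ outside G S w, ∀ v ∈ J, G.Adj u v → ∃ i ∈ I, G.Adj i u)
    (hdom : ∀ v ∈ S, G.Adj w v → v ∉ J → ∃ i ∈ I, G.Adj i v) : J.card = 1 := by
  obtain ⟨k, l, hk, hl, hkl⟩ := hw
  obtain ⟨M, hIM, hM⟩ := exists_maxIndepIn hI hIS
  have hsep : Separated G M J := by
    refine ⟨Finset.disjoint_left.2 fun v hv hvJ => (mem_outside.1 (hM.subset hv)).2.2 (hwJ v hvJ),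
      fun u hu v hv huv => ?_⟩
    obtain ⟨i, hi, hiu⟩ := hIJ u (hM.subset hu) v hv huv
    exact hM.indep i (hIM hi) u hu hiu
  have hmax : MaxIndepIn G (S.erase w) (M ∪ J) := by
    refine ⟨Finset.union_subset (hM.subset.trans outside_subset_erase) fun v hv =>
        Finset.mem_erase.2 ⟨(hwJ v hv).ne', hJS hv⟩,
      hsep.isIndepFinset_union subset_rfl subset_rfl hM.indep hJ, fun v hv hvMJ => ?_⟩
    rw [Finset.mem_union, not_or] at hvMJ
    rw [Finset.mem_erase] at hv
    by_cases hwv : G.Adj w v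
    · obtain ⟨i, hi, hiv⟩ := hdom v hv.2 hwv hvMJ.2
      exact ⟨i, Finset.mem_union_left _ (hIM hi), hiv⟩
    · obtain ⟨u, hu, huv⟩ := hM.exists_adj v (mem_outside.2 ⟨hv.2, hv.1, hwv⟩) hvMJ.1
      exact ⟨u, Finset.mem_union_left _ hu, huv⟩
  have hcard := hk _ hmax
  rw [Finset.card_union_of_disjoint hsep.disjoint, hl M hM] at hcard
  omega

end WellCoveredOn

section Conn

variable {V : Type*} {G : SimpleGraph V} {A A' B S : Finset V} {b c u v w : V}

/-- The subgraph of `G` induced on `S` is connected, phrased through parts of `S` that are closed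
under adjacency, so that no subtypes occur. -/
structure Conn (G : SimpleGraph V) (S : Finset V) : Prop where
  nonempty : S.Nonempty
  eq_of_closed : ∀ T ⊆ S, T.Nonempty → (∀ a ∈ T, ∀ b ∈ S, G.Adj a b → b ∈ T) → T = S

/-- `B` is a union of branches at the vertex `u` of `A`: every edge from `A` to `B` starts
at `u`. -/
structure Branch (G : SimpleGraph V) (A B : Finset V) (u : V) : Prop where
  disjoint : Disjoint A B
  mem : u ∈ A
  eq_of_adj : ∀ a ∈ A, ∀ v ∈ B, G.Adj a v → a = u

open Classical in
/-- The number of neighbours of `a` in `S`. -/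
noncomputable def degIn (G : SimpleGraph V) (S : Finset V) (a : V) : ℕ := (S.filter (G.Adj a)).card

/-- The sum of the degrees of the subgraph of `G` induced on `S`, that is, twice its number of
edges. -/
noncomputable def degSum (G : SimpleGraph V) (S : Finset V) : ℕ := ∑ a ∈ S, degIn G S a

/-- The subgraph of `G` induced on `S` is a tree. -/
structure TreeOn (G : SimpleGraph V) (S : Finset V) : Prop where
  conn : Conn G S
  degSum_add_two : degSum G S + 2 = 2 * S.card

/-- The subgraph of `G` induced on `S` is connected and unicyclic. -/
structure UniOn (G : SimpleGraph V) (S : Finset V) : Prop where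
  conn : Conn G S
  degSum_eq : degSum G S = 2 * S.card

lemma Bridge.branch (h : Bridge G A B u b) : Branch G A B u :=
  ⟨h.disjoint, h.left_mem, fun a ha v hv hav => ((h.adj_iff a ha v hv).1 hav).1⟩

lemma conn_singleton (u : V) : Conn G {u} :=
  ⟨Finset.singleton_nonempty u, fun _ hT hne _ =>
    (Finset.subset_singleton_iff.1 hT).resolve_left hne.ne_empty⟩

lemma conn_univ_of_connected [Fintype V] (h : G.Connected) : Conn G Finset.univ := by
  have := h.nonempty
  refine ⟨Finset.univ_nonempty, fun T _ ⟨a, ha⟩ hcl => Finset.eq_univ_iff_forall.2 fun b => ?_⟩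
  obtain ⟨p⟩ := h.preconnected a b
  induction p with
  | nil => exact ha
  | cons hadj _ ih => exact ih (hcl _ ha _ (Finset.mem_univ _) hadj)

lemma Conn.exists_adj (h : Conn G S) (hu : u ∈ S) (hS : S ≠ {u}) : ∃ b ∈ S, G.Adj u b := by
  by_contra! hcon
  refine hS (h.eq_of_closed {u} (Finset.singleton_subset_iff.2 hu)
    (Finset.singleton_nonempty u) fun a ha b hb hab => ?_).symm
  rw [Finset.mem_singleton] at ha
  exact absurd (ha ▸ hab) (hcon b hb)

lemma exists_conn_component (hb : b ∈ S) :
    ∃ C ⊆ S, b ∈ C ∧ Conn G C ∧ ∀ a ∈ C, ∀ v ∈ S, G.Adj a v → v ∈ C := by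
  classical
  obtain ⟨C, hCS, hC⟩ := (S.powerset.filter fun C =>
    b ∈ C ∧ ∀ a ∈ C, ∀ v ∈ S, G.Adj a v → v ∈ C).exists_le_minimal
      (a := S) (by simpa [hb] using fun _ _ v hv _ => hv)
  have hmin : ∀ T ⊆ C, b ∈ T → (∀ a ∈ T, ∀ v ∈ S, G.Adj a v → v ∈ T) → C ⊆ T := fun T hT hbT hcl =>
    hC.2 (by simp only [Finset.mem_filter, Finset.mem_powerset]
             exact ⟨hT.trans hCS, hbT, hcl⟩) hT
  obtain ⟨-, hbC, hcl⟩ := Finset.mem_filter.1 hC.1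
  refine ⟨C, hCS, hbC, ⟨⟨b, hbC⟩, fun T hT ⟨a, haT⟩ hTcl => ?_⟩, hcl⟩
  by_cases hbT : b ∈ T
  · exact hT.antisymm (hmin T hT hbT fun a ha v hv hav =>
      hTcl a ha v (hcl a (hT ha) v hv hav) hav)
  · have hsub := hmin (C \ T) Finset.sdiff_subset (Finset.mem_sdiff.2 ⟨hbC, hbT⟩)
      fun a ha v hv hav => by
        rw [Finset.mem_sdiff] at ha ⊢
        exact ⟨hcl a ha.1 v hv hav, fun hvT => ha.2 (hTcl v hvT a ha.1 hav.symm)⟩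
    exact absurd haT (Finset.mem_sdiff.1 (hsub (hT haT))).2

lemma degIn_pos (hb : b ∈ S) (hub : G.Adj u b) : 0 < degIn G S u := by
  classical
  exact Finset.card_pos.2 ⟨b, Finset.mem_filter.2 ⟨hb, hub⟩⟩

lemma degSum_singleton (u : V) : degSum G {u} = 0 := by
  simp [degSum, degIn, Finset.filter_singleton]

lemma treeOn_singleton (u : V) : TreeOn G {u} :=
  ⟨conn_singleton u, by rw [degSum_singleton, Finset.card_singleton]⟩

lemma UniOn.ne_singleton (h : UniOn G S) (u : V) : S ≠ {u} := by
  rintro rfl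
  simpa [degSum_singleton] using h.degSum_eq

lemma Unicyclic.uniOn_univ [Fintype V] (h : Unicyclic G) : UniOn G Finset.univ := by
  classical
  refine ⟨conn_univ_of_connected h.1, ?_⟩
  have hcard : G.edgeFinset.card = Fintype.card V := by
    rw [← h.2, ← Set.ncard_coe_finset, SimpleGraph.coe_edgeFinset]
  rw [Finset.card_univ, ← hcard, ← G.sum_degrees_eq_twice_card_edges, degSum]
  refine Finset.sum_congr rfl fun a _ => ?_
  rw [degIn, ← SimpleGraph.card_neighborFinset_eq_degree]
  congr 1
  ext v
  simp

lemma Branch.bridge (h : Branch G A B u) (hb : b ∈ B) (hub : G.Adj u b) (hdeg : degIn G B u = 1) :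
    Bridge G A B u b := by
  classical
  refine ⟨h.disjoint, h.mem, hb, fun a ha v hv => ⟨fun hav => ?_, ?_⟩⟩
  · obtain rfl := h.eq_of_adj a ha v hv hav
    exact ⟨rfl, Finset.card_le_one.1 hdeg.le v (Finset.mem_filter.2 ⟨hv, hav⟩) b
      (Finset.mem_filter.2 ⟨hb, hub⟩)⟩
  · rintro ⟨rfl, rfl⟩
    exact hub

lemma Bridge.degIn_eq_one (h : Bridge G A B u b) : degIn G B u = 1 := by
  classical
  refine Finset.card_eq_one.2 ⟨b, Finset.ext fun v => ?_⟩
  rw [Finset.mem_filter, Finset.mem_singleton]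
  exact ⟨fun hv => ((h.adj_iff u h.left_mem v hv.1).1 hv.2).2,
    fun hv => hv ▸ ⟨h.right_mem, h.adj⟩⟩

variable [DecidableEq V]

lemma Branch.conn_left (hB : Branch G A B u) (h : Conn G (A ∪ B)) : Conn G A := by
  refine ⟨⟨u, hB.mem⟩, fun T hT hne hcl => ?_⟩
  by_cases huT : u ∈ T
  · have hTB : T ∪ B = A ∪ B := by
      refine h.eq_of_closed _ (Finset.union_subset_union_left hT)
        (hne.mono Finset.subset_union_left) fun a ha b hb hab => ?_
      rcases Finset.mem_union.1 hb with hb | hb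
      · rcases Finset.mem_union.1 ha with ha | ha
        · exact Finset.mem_union_left _ (hcl a ha b hb hab)
        · exact Finset.mem_union_left _ (hB.eq_of_adj b hb a ha hab.symm ▸ huT)
      · exact Finset.mem_union_right _ hb
    refine hT.antisymm fun a ha => ?_
    exact (Finset.mem_union.1 (hTB ▸ Finset.mem_union_left B ha)).resolve_right
      (Finset.disjoint_left.1 hB.disjoint ha)
  · have hTAB : T = A ∪ B := by
      refine h.eq_of_closed T (hT.trans Finset.subset_union_left) hne fun a ha b hb hab => ?_
      rcases Finset.mem_union.1 hb with hb | hb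
      · exact hcl a ha b hb hab
      · exact absurd (hB.eq_of_adj a (hT ha) b hb hab ▸ ha) huT
    exact absurd (hTAB ▸ Finset.mem_union_left _ hB.mem) huT

lemma Conn.exists_branch (h : Conn G S) (hu : u ∈ S) (hb : b ∈ S) (hub : G.Adj u b) :
    ∃ A B, S = A ∪ B ∧ Branch G A B u ∧ b ∈ B ∧ Conn G A ∧ Conn G B := by
  obtain ⟨C, hC, hbC, hconn, hcl⟩ :=
    exists_conn_component (G := G) (Finset.mem_erase.2 ⟨hub.ne', hb⟩)
  have hS : S = S \ C ∪ C :=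
    (Finset.sdiff_union_of_subset (hC.trans (Finset.erase_subset _ _))).symm
  have hbr : Branch G (S \ C) C u := by
    refine ⟨Finset.sdiff_disjoint, Finset.mem_sdiff.2 ⟨hu, fun huC => ?_⟩, fun a ha v hv hav => ?_⟩
    · exact Finset.ne_of_mem_erase (hC huC) rfl
    · by_contra hne
      rw [Finset.mem_sdiff] at ha
      exact ha.2 (hcl v hv a (Finset.mem_erase.2 ⟨hne, ha.1⟩) hav.symm)
  exact ⟨S \ C, C, hS, hbr, hbC, hbr.conn_left (hS ▸ h), hconn⟩

lemma Branch.degSum_union (h : Branch G A B u) :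
    degSum G (A ∪ B) = degSum G A + degSum G B + 2 * degIn G B u := by
  classical
  have hdeg : ∀ a, degIn G (A ∪ B) a = degIn G A a + degIn G B a := fun a => by
    rw [degIn, Finset.filter_union, Finset.card_union_of_disjoint
      (h.disjoint.mono (Finset.filter_subset _ _) (Finset.filter_subset _ _))]
    rfl
  have hA : ∑ a ∈ A, degIn G B a = degIn G B u := by
    refine Finset.sum_eq_single_of_mem u h.mem fun a ha hne => ?_
    rw [degIn, Finset.card_eq_zero, Finset.filter_eq_empty_iff]
    exact fun v hv hav => hne (h.eq_of_adj a ha v hv hav)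
  have hB : ∑ a ∈ B, degIn G A a = ∑ a ∈ A, degIn G B a := by
    simp only [degIn, Finset.card_filter]
    rw [Finset.sum_comm]
    simp only [G.adj_comm]
  simp only [degSum, Finset.sum_union h.disjoint, hdeg, Finset.sum_add_distrib, hB, hA]
  ring

omit [DecidableEq V] in
lemma even_degSum (G : SimpleGraph V) (S : Finset V) : Even (degSum G S) := by
  classical
  induction S using Finset.induction_on with
  | empty => simp [degSum]
  | insert a S ha ih =>
    have h : Branch G {a} S a := ⟨Finset.disjoint_singleton_left.2 ha,
      Finset.mem_singleton_self a, fun c hc _ _ _ => Finset.mem_singleton.1 hc⟩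
    rw [Finset.insert_eq, h.degSum_union, degSum_singleton, zero_add]
    exact ih.add (even_two_mul _)

omit [DecidableEq V] in
lemma Conn.two_mul_card_le (h : Conn G S) : 2 * S.card ≤ degSum G S + 2 := by
  classical
  induction S using Finset.strongInduction with
  | H S ih =>
    obtain ⟨u, hu⟩ := h.nonempty
    by_cases hS : S = {u}
    · simp [hS]
    · obtain ⟨b, hb, hub⟩ := h.exists_adj hu hS
      obtain ⟨A, B, rfl, hbr, hbB, hA, hB⟩ := h.exists_branch hu hb hub
      have hcA := ih A (Finset.ssubset_iff.2 ⟨b, Finset.disjoint_right.1 hbr.disjoint hbB,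
        Finset.insert_subset hb Finset.subset_union_left⟩) hA
      have hcB := ih B (Finset.ssubset_iff.2 ⟨u, Finset.disjoint_left.1 hbr.disjoint hbr.mem,
        Finset.insert_subset hu Finset.subset_union_right⟩) hB
      have := degIn_pos hbB hub
      rw [hbr.degSum_union, Finset.card_union_of_disjoint hbr.disjoint]
      omega

lemma Bridge.degSum_union (h : Bridge G A B u b) :
    degSum G (A ∪ B) = degSum G A + degSum G B + 2 := by
  rw [h.branch.degSum_union, h.degIn_eq_one]

lemma Bridge.treeOn_left (h : Bridge G A B u b) (hAB : TreeOn G (A ∪ B)) (hB : TreeOn G B) :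
    TreeOn G A := by
  refine ⟨h.branch.conn_left hAB.conn, ?_⟩
  have := hAB.degSum_add_two
  rw [h.degSum_union, Finset.card_union_of_disjoint h.disjoint] at this
  have := hB.degSum_add_two
  omega

lemma Bridge.uniOn_left (h : Bridge G A B u b) (hAB : UniOn G (A ∪ B)) (hB : TreeOn G B) :
    UniOn G A := by
  refine ⟨h.branch.conn_left hAB.conn, ?_⟩
  have := hAB.degSum_eq
  rw [h.degSum_union, Finset.card_union_of_disjoint h.disjoint] at this
  have := hB.degSum_add_two
  omega

lemma TreeOn.exists_bridge (h : TreeOn G S) (hu : u ∈ S) (hb : b ∈ S) (hub : G.Adj u b) :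
    ∃ A B, S = A ∪ B ∧ Bridge G A B u b ∧ TreeOn G A ∧ TreeOn G B := by
  obtain ⟨A, B, rfl, hbr, hbB, hA, hB⟩ := h.conn.exists_branch hu hb hub
  have hsum := h.degSum_add_two
  rw [hbr.degSum_union, Finset.card_union_of_disjoint hbr.disjoint] at hsum
  have := degIn_pos hbB hub
  have := hA.two_mul_card_le
  have := hB.two_mul_card_le
  exact ⟨A, B, rfl, hbr.bridge hbB hub (by omega), ⟨hA, by omega⟩, hB, by omega⟩

lemma TreeOn.exists_pendant (h : TreeOn G S) (hw : w ∈ S) (hS : S ≠ {w}) :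
    ∃ A u v, S = A ∪ {v} ∧ Bridge G A {v} u v ∧ w ∈ A := by
  induction S using Finset.strongInduction generalizing w with
  | H S ih =>
    obtain ⟨b, hb, hwb⟩ := h.conn.exists_adj hw hS
    obtain ⟨A, B, rfl, hbr, -, hB⟩ := h.exists_bridge hw hb hwb
    by_cases hBb : B = {b}
    · exact ⟨A, w, b, by rw [hBb], hBb ▸ hbr, hbr.left_mem⟩
    obtain ⟨A', u, v, rfl, hbr', hbA'⟩ := ih B (Finset.ssubset_iff.2 ⟨w, hbr.left_notMem,
      Finset.insert_subset hw Finset.subset_union_right⟩) hB hbr.right_mem hBb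
    have hvb : v ≠ b := fun hvb => hbr'.symm.left_notMem (hvb ▸ hbA')
    refine ⟨A ∪ A', u, v, (Finset.union_assoc _ _ _).symm, ⟨?_, ?_, hbr'.right_mem, ?_⟩,
      Finset.mem_union_left _ hbr.left_mem⟩
    · exact Finset.disjoint_union_left.2
        ⟨hbr.disjoint.mono_right Finset.subset_union_right, hbr'.disjoint⟩
    · exact Finset.mem_union_right _ hbr'.left_mem
    · intro a ha y hy
      rcases Finset.mem_union.1 ha with ha | ha
      · have hau : a ≠ u := fun hau => Finset.disjoint_left.1 hbr.disjoint ha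
          (hau ▸ Finset.mem_union_left _ hbr'.left_mem)
        have hyb : y ≠ b := Finset.mem_singleton.1 hy ▸ hvb
        simp [hbr.adj_iff a ha y (Finset.mem_union_right _ hy), hau, hyb]
      · exact hbr'.adj_iff a ha y hy

lemma exists_bridge_singleton (hv : v ∈ S) (hu : u ∈ S) (hadj : ∀ y ∈ S, G.Adj y v ↔ y = u) :
    ∃ A, S = A ∪ {v} ∧ Bridge G A {v} u v := by
  have huv := (hadj u hu).2 rfl
  refine ⟨S.erase v, by rw [Finset.union_comm, ← Finset.insert_eq, Finset.insert_erase hv],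
    by simp, Finset.mem_erase.2 ⟨huv.ne, hu⟩, Finset.mem_singleton_self v, fun y hy z hz => ?_⟩
  rw [Finset.mem_singleton.1 hz, hadj y (Finset.mem_of_mem_erase hy), and_iff_left rfl]

/-- `w` has exactly two neighbours, `b` and `c`, in `B`. In a unicyclic graph with `B` the set of
all other vertices, this makes `w` a vertex of degree two. -/
structure TwoNbrs (G : SimpleGraph V) (B : Finset V) (w b c : V) : Prop where
  notMem : w ∉ B
  left_mem : b ∈ B
  right_mem : c ∈ B
  ne : b ≠ c
  adj_iff : ∀ v ∈ B, G.Adj w v ↔ v = b ∨ v = c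

omit [DecidableEq V] in
lemma TwoNbrs.symm (h : TwoNbrs G B w b c) : TwoNbrs G B w c b :=
  ⟨h.notMem, h.right_mem, h.left_mem, h.ne.symm, fun v hv => (h.adj_iff v hv).trans or_comm⟩

lemma Branch.bridge_union (h : Branch G (A ∪ A') B u) (hA : Bridge G A A' u b) :
    Bridge G (A ∪ B) A' u b := by
  refine ⟨Finset.disjoint_union_left.2 ⟨hA.disjoint,
      (h.disjoint.mono_left Finset.subset_union_right).symm⟩,
    Finset.mem_union_left _ hA.left_mem, hA.right_mem, fun a ha v hv => ?_⟩
  rcases Finset.mem_union.1 ha with ha | ha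
  · exact hA.adj_iff a ha v hv
  · have hvu : v ≠ u := fun hvu => hA.left_notMem (hvu ▸ hv)
    have hau : a ≠ u := fun hau => Finset.disjoint_left.1 h.disjoint h.mem (hau ▸ ha)
    have hav : ¬ G.Adj a v := fun hav =>
      hvu (h.eq_of_adj v (Finset.mem_union_right _ hv) a ha hav.symm)
    simp only [hau, hav, false_and]

omit [DecidableEq V] in
lemma Branch.twoNbrs (h : Branch G {u} B u) (hb : b ∈ B) (hub : G.Adj u b)
    (hdeg : degIn G B u = 2) : ∃ c, TwoNbrs G B u b c := by
  classical
  have hbN : b ∈ B.filter (G.Adj u) := Finset.mem_filter.2 ⟨hb, hub⟩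
  obtain ⟨c, hc⟩ := Finset.card_eq_one.1
    (show ((B.filter (G.Adj u)).erase b).card = 1 by
      rw [Finset.card_erase_of_mem hbN]
      exact congrArg (· - 1) hdeg)
  have hN : B.filter (G.Adj u) = {b, c} := by rw [← Finset.insert_erase hbN, hc]
  have hcN : c ∈ (B.filter (G.Adj u)).erase b := hc ▸ Finset.mem_singleton_self c
  refine ⟨c, Finset.disjoint_left.1 h.disjoint h.mem, hb,
    (Finset.mem_filter.1 (Finset.mem_of_mem_erase hcN)).1, (Finset.ne_of_mem_erase hcN).symm,
    fun v hv => ?_⟩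
  simpa only [Finset.mem_filter, hv, true_and, Finset.mem_insert, Finset.mem_singleton] using
    Finset.ext_iff.1 hN v

lemma UniOn.exists_bridge_or_twoNbrs (h : UniOn G S) (hw : w ∈ S) :
    (∃ A B b, S = A ∪ B ∧ Bridge G A B w b ∧ (TreeOn G A ∧ UniOn G B ∨ UniOn G A ∧ TreeOn G B)) ∨
      ∃ B b c, S = insert w B ∧ TreeOn G B ∧ TwoNbrs G B w b c := by
  obtain ⟨b, hb, hwb⟩ := h.conn.exists_adj hw (h.ne_singleton w)
  obtain ⟨A, B, rfl, hbr, hbB, hA, hB⟩ := h.conn.exists_branch hw hb hwb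
  have hsum := h.degSum_eq
  rw [hbr.degSum_union, Finset.card_union_of_disjoint hbr.disjoint] at hsum
  have := degIn_pos hbB hwb
  have := hA.two_mul_card_le
  have := hB.two_mul_card_le
  obtain ⟨p, hp⟩ := even_degSum G A
  obtain ⟨q, hq⟩ := even_degSum G B
  rcases (by omega : degIn G B w = 1 ∨ degIn G B w = 2) with hdeg | hdeg
  · refine Or.inl ⟨A, B, b, rfl, hbr.bridge hbB hwb hdeg, ?_⟩
    rcases (by omega : degSum G A + 2 = 2 * A.card ∨ degSum G A = 2 * A.card) with hdA | hdA
    · exact Or.inl ⟨⟨hA, hdA⟩, hB, by omega⟩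
    · exact Or.inr ⟨⟨hA, hdA⟩, hB, by omega⟩
  have hAtree : TreeOn G A := ⟨hA, by omega⟩
  by_cases hAw : A = {w}
  · subst hAw
    obtain ⟨c, hc⟩ := hbr.twoNbrs hbB hwb hdeg
    exact Or.inr ⟨B, b, c, (Finset.insert_eq w B).symm, ⟨hB, by omega⟩, hc⟩
  · obtain ⟨d, hd, hwd⟩ := hA.exists_adj hbr.mem hAw
    obtain ⟨A₁, A₂, rfl, hbr', -, hA₂⟩ := hAtree.exists_bridge hbr.mem hd hwd
    have hS : A₁ ∪ A₂ ∪ B = A₁ ∪ B ∪ A₂ := Finset.union_right_comm A₁ A₂ B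
    have hbr'' := hbr.bridge_union hbr'
    exact Or.inl ⟨A₁ ∪ B, A₂, d, hS, hbr'', Or.inr ⟨hbr''.uniOn_left (hS ▸ h) hA₂, hA₂⟩⟩

end Conn

section RepBy

variable {V : Type*} [DecidableEq V] {G : SimpleGraph V} {A B C I S : Finset V}
  {b b' b'' c c' u v w : V} {e k p q : ℕ}

/-- `G[S]`, rooted at `w`, has the independence polynomial of a rooted tree whose rank is tied to
the order of `S`. The number `e` is the one of `WellCoveredAt`, and `p` is the cyclomatic number of
`G[S]`. -/
def RepBy (G : SimpleGraph V) (S : Finset V) (w : V) (e p : ℕ) : Prop :=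
  ∃ τ a, TreeRep G S w τ a (a + e) ∧ S.card = 2 * a + e + p ∧ τ.rank + 1 = a + e + p

lemma RepBy.singleton (w : V) : RepBy G {w} w 1 0 :=
  ⟨.leaf, 0, .singleton w, by simp, rfl⟩

lemma RepBy.addLeaf (hA : RepBy G A w 1 p) (h : Bridge G A {v} w v) :
    RepBy G (A ∪ {v}) w 0 p := by
  obtain ⟨τ, a, hτ, hcard, hrank⟩ := hA
  refine ⟨τ, a + 1, hτ.addLeaf h, ?_, by omega⟩
  rw [Finset.card_union_of_disjoint h.disjoint, Finset.card_singleton]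
  omega

lemma RepBy.join (hA : RepBy G A w e p) (hB : RepBy G B b 0 q) (h : Bridge G A B w b) :
    RepBy G (A ∪ B) w e (p + q) := by
  obtain ⟨σ, a, hσ, hAcard, hσrank⟩ := hA
  obtain ⟨τ, c, hτ, hBcard, hτrank⟩ := hB
  refine ⟨.join σ τ, a + c, ?_, ?_, ?_⟩
  · rw [add_right_comm]
    exact hσ.join hτ h
  · rw [Finset.card_union_of_disjoint h.disjoint]
    omega
  · rw [RTree.rank]
    omega

lemma RepBy.triangle (hA : RepBy G A u 1 p) (h : Bridge G A {v} u v)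
    (hw : TwoNbrs G (A ∪ {v}) w u v) : RepBy G (insert w (A ∪ {v})) w 0 (p + 1) := by
  obtain ⟨τ, a, hτ, hcard, hrank⟩ := hA
  refine ⟨_, a + 1, hτ.triangle h hw.notMem hw.adj_iff, ?_, ?_⟩
  · rw [Finset.card_insert_of_notMem hw.notMem, Finset.card_union_of_disjoint h.disjoint,
      Finset.card_singleton]
    omega
  · simp only [RTree.rank]
    omega

lemma RepBy.pentagon (hA : RepBy G A b' 1 p) (hb : Bridge G A {b} b' b)
    (h : Bridge G (A ∪ {b}) ({c'} ∪ {c}) b' c') (hc : Bridge G {c'} {c} c' c)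
    (hw : TwoNbrs G (A ∪ {b} ∪ ({c'} ∪ {c})) w b c) :
    RepBy G (insert w (A ∪ {b} ∪ ({c'} ∪ {c}))) w 0 (p + 1) := by
  obtain ⟨τ, a, hτ, hcard, hrank⟩ := hA
  refine ⟨_, a + 2, hτ.pentagon hb h hc hw.notMem hw.adj_iff, ?_, ?_⟩
  · rw [Finset.card_insert_of_notMem hw.notMem, Finset.card_union_of_disjoint h.disjoint,
      Finset.card_union_of_disjoint hb.disjoint, Finset.card_union_of_disjoint hc.disjoint]
    simp only [Finset.card_singleton]
    omega
  · simp only [RTree.rank]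
    omega

lemma Bridge.left_ssubset (h : Bridge G A B u b) : A ⊂ A ∪ B :=
  Finset.ssubset_iff.2 ⟨b, h.symm.left_notMem,
    Finset.insert_subset (Finset.mem_union_right _ h.right_mem) Finset.subset_union_left⟩

lemma Bridge.right_ssubset (h : Bridge G A B u b) : B ⊂ A ∪ B :=
  Finset.union_comm B A ▸ h.symm.left_ssubset

/-! ### Well-covered trees -/

lemma WellCoveredAt.pendant_or_bridge (hw : WellCoveredAt G (A ∪ B) w e) (h : Bridge G A B w b)
    (hB : Conn G B) : (B = {b} ∧ e = 0 ∧ WellCoveredAt G A w 1) ∨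
      (WellCoveredAt G A w e ∧ WellCoveredAt G B b 0) := by
  by_cases hBb : B = {b}
  · subst hBb
    exact Or.inl ⟨rfl, hw.of_pendant h⟩
  · obtain ⟨b', hb', hbb'⟩ := hB.exists_adj h.right_mem hBb
    exact Or.inr (hw.of_bridge h hb' hbb')

lemma TreeOn.repBy (hS : TreeOn G S) (hw : w ∈ S) (h : WellCoveredAt G S w e) :
    RepBy G S w e 0 := by
  induction S using Finset.strongInduction generalizing w e with
  | H S ih =>
    by_cases hSw : S = {w}
    · subst hSw
      obtain rfl := h.eq_one_of_singleton
      exact .singleton w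
    · obtain ⟨b, hb, hwb⟩ := hS.conn.exists_adj hw hSw
      obtain ⟨A, B, rfl, hbr, hA, hB⟩ := hS.exists_bridge hw hb hwb
      rcases h.pendant_or_bridge hbr hB.conn with ⟨rfl, rfl, hwA⟩ | ⟨hwA, hbB⟩
      · exact (ih A hbr.left_ssubset hA hbr.left_mem hwA).addLeaf hbr
      · exact (ih A hbr.left_ssubset hA hbr.left_mem hwA).join
          (ih B hbr.right_ssubset hB hbr.right_mem hbB) hbr

omit [DecidableEq V] in
lemma TreeOn.even_card (hS : TreeOn G S) (h : WellCoveredOn G S k) (hw : w ∈ S) (hSw : S ≠ {w}) :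
    Even S.card := by
  classical
  obtain ⟨A, u, v, rfl, hbr, -⟩ := hS.exists_pendant hw hSw
  obtain ⟨τ, a, -, hcard, -⟩ :=
    hS.repBy (Finset.mem_union_left _ hbr.left_mem) (h.wellCoveredAt_of_pendant hbr)
  exact ⟨a, by omega⟩

/-! ### Well-covered unicyclic graphs -/

omit [DecidableEq V] in
lemma TreeOn.eq_of_adj_of_adj (hS : TreeOn G S) (hb : b ∈ S) (hb' : b' ∈ S) (hb'' : b'' ∈ S)
    (hc : c ∈ S) (hbb' : G.Adj b b') (hbb'' : G.Adj b b'') (hb'c : G.Adj b' c)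
    (hb''c : G.Adj b'' c) (hcb : c ≠ b) : b'' = b' := by
  classical
  by_contra hne
  obtain ⟨A, B, rfl, hbr, -, -⟩ := hS.exists_bridge hb hb' hbb'
  have hcB : c ∈ B := (Finset.mem_union.1 hc).resolve_left fun hcA =>
    hcb ((hbr.adj_iff c hcA b' hbr.right_mem).1 hb'c.symm).1
  have hb''A : b'' ∈ A := (Finset.mem_union.1 hb'').resolve_right fun hb''B =>
    hne ((hbr.adj_iff b hbr.left_mem b'' hb''B).1 hbb'').2
  exact hbb''.ne ((hbr.adj_iff b'' hb''A c hcB).1 hb''c).1.symm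

lemma TwoNbrs.mem_outside (h : TwoNbrs G B w b c) (hv : v ∈ B) (hvb : v ≠ b) (hvc : v ≠ c) :
    v ∈ outside G (insert w B) w :=
  _root_.mem_outside.2 ⟨Finset.mem_insert_of_mem hv, fun hvw => h.notMem (hvw ▸ hv),
    fun hwv => ((h.adj_iff v hv).1 hwv).elim hvb hvc⟩

lemma TwoNbrs.wellCoveredOn (h : TwoNbrs G B w b c) (hw : WellCoveredAt G (insert w B) w e) :
    ∃ k, WellCoveredOn G B k := by
  obtain ⟨k, -, hk, -, -⟩ := hw
  exact ⟨k, Finset.erase_insert h.notMem ▸ hk⟩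

/-- Otherwise `{b', c'}` is independent and dominates all neighbours of `w`. -/
lemma TwoNbrs.adj_of_adj (h : TwoNbrs G B w b c) (hw : WellCoveredAt G (insert w B) w 0)
    (hb' : b' ∈ B) (hc' : c' ∈ B) (hbb' : G.Adj b b') (hcc' : G.Adj c c') (hb'c : b' ≠ c)
    (hc'b : c' ≠ b) : G.Adj b' c' := by
  by_contra hcon
  have := hw.card_eq_one (I := {b', c'}) (J := ∅)
    (isIndepFinset_insert.2 ⟨by simp [IsIndepFinset], by simpa using hcon⟩)
    (by
      simp only [Finset.insert_subset_iff, Finset.singleton_subset_iff]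
      exact ⟨h.mem_outside hb' hbb'.ne' hb'c, h.mem_outside hc' hc'b hcc'.ne'⟩)
    isIndepFinset_empty (Finset.empty_subset _) (by simp) (by simp) fun v hv hwv _ => by
      rcases (h.adj_iff v ((Finset.mem_insert.1 hv).resolve_left hwv.ne')).1 hwv with rfl | rfl
      · exact ⟨b', by simp, hbb'.symm⟩
      · exact ⟨c', by simp, hcc'.symm⟩
  simp at this

lemma TwoNbrs.repBy_triangle (h : TwoNbrs G (A ∪ {v}) w u v) (hk : WellCoveredOn G (A ∪ {v}) k)
    (hA : TreeOn G A) (hbr : Bridge G A {v} u v) : RepBy G (insert w (A ∪ {v})) w 0 1 := by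
  have hu := ((hk.wellCoveredAt_of_pendant hbr).of_pendant hbr).2
  exact (hA.repBy hbr.left_mem hu).triangle hbr h

lemma TwoNbrs.repBy_of_adj (h : TwoNbrs G B w b c) (hB : TreeOn G B)
    (hw : WellCoveredAt G (insert w B) w 0) (hbc : G.Adj b c) : RepBy G (insert w B) w 0 1 := by
  obtain ⟨k, hk⟩ := h.wellCoveredOn hw
  obtain ⟨A, C, rfl, hbr, hA, hC⟩ := hB.exists_bridge h.left_mem h.right_mem hbc
  have htriv : A = {b} ∨ C = {c} := by
    by_contra! hcon
    obtain ⟨b', hb', hbb'⟩ := hA.conn.exists_adj hbr.left_mem hcon.1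
    obtain ⟨c', hc', hcc'⟩ := hC.conn.exists_adj hbr.right_mem hcon.2
    have hb'c' := h.adj_of_adj hw (Finset.mem_union_left _ hb') (Finset.mem_union_right _ hc')
      hbb' hcc' (fun e => hbr.symm.left_notMem (e ▸ hb')) fun e => hbr.left_notMem (e ▸ hc')
    exact hbb'.ne ((hbr.adj_iff b' hb' c' hc').1 hb'c').1.symm
  rcases htriv with rfl | rfl
  · rw [Finset.union_comm] at h hk ⊢
    exact h.symm.repBy_triangle hk hC hbr.symm
  · exact h.repBy_triangle hk hA hbr

omit [DecidableEq V] in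
lemma TwoNbrs.exists_adj_iff (h : TwoNbrs G B w b c) (hB : TreeOn G B)
    (hadj : ∀ p ∈ B, ∀ q ∈ B, G.Adj b p → G.Adj c q → G.Adj p q) (hbc : ¬ G.Adj b c) :
    ∃ b' ∈ B, ∃ c' ∈ B, G.Adj b' c' ∧ (∀ v ∈ B, G.Adj v b ↔ v = b') ∧
      ∀ v ∈ B, G.Adj v c ↔ v = c' := by
  obtain ⟨b', hb', hbb'⟩ := hB.conn.exists_adj h.left_mem fun hBb =>
    h.ne (Finset.mem_singleton.1 (hBb ▸ h.right_mem)).symm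
  obtain ⟨c', hc', hcc'⟩ := hB.conn.exists_adj h.right_mem fun hBc =>
    h.ne (Finset.mem_singleton.1 (hBc ▸ h.left_mem))
  have hb'c' := hadj b' hb' c' hc' hbb' hcc'
  have hc'b : c' ≠ b := fun e => hbc (e ▸ hcc'.symm)
  have hb'c : b' ≠ c := fun e => hbc (e ▸ hbb')
  refine ⟨b', hb', c', hc', hb'c', fun v hv => ⟨fun hvb => ?_, fun e => e ▸ hbb'.symm⟩,
    fun v hv => ⟨fun hvc => ?_, fun e => e ▸ hcc'.symm⟩⟩
  · exact hB.eq_of_adj_of_adj h.left_mem hb' hv hc' hbb' hvb.symm hb'c'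
      (hadj v hv c' hc' hvb.symm hcc') hc'b
  · exact hB.eq_of_adj_of_adj h.right_mem hc' hv hb' hcc' hvc.symm hb'c'.symm
      (hadj b' hb' v hv hbb' hvc.symm).symm hb'c

/-- In a tree `B` whose vertices `b` and `c` are pendant at adjacent vertices `b'` and `c'`, the
edge `b' c'` splits `B` into parts containing `b` and `c`. -/
lemma TreeOn.exists_bridge_of_pendants (hB : TreeOn G B) (hb : b ∈ B) (hc : c ∈ B) (hb' : b' ∈ B)
    (hc' : c' ∈ B) (hbc : ¬ G.Adj b c) (hb'c' : G.Adj b' c') (hadjb : ∀ v ∈ B, G.Adj v b ↔ v = b')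
    (hadjc : ∀ v ∈ B, G.Adj v c ↔ v = c') :
    ∃ A C, B = A ∪ {b} ∪ (C ∪ {c}) ∧ Bridge G A {b} b' b ∧ Bridge G C {c} c' c ∧
      Bridge G (A ∪ {b}) (C ∪ {c}) b' c' ∧ TreeOn G A ∧ TreeOn G C := by
  obtain ⟨A, C, rfl, hbr, hA, hC⟩ := hB.exists_bridge hb' hc' hb'c'
  have hbA : b ∈ A := (Finset.mem_union.1 hb).resolve_right fun hbC => by
    have hbc' : b = c' := ((hbr.adj_iff b' hbr.left_mem b hbC).1 ((hadjb b' hb').2 rfl)).2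
    exact hbc ((hadjc b hb).2 hbc')
  have hcC : c ∈ C := (Finset.mem_union.1 hc).resolve_left fun hcA => by
    have hcb' : c = b' := ((hbr.adj_iff c hcA c' hbr.right_mem).1 ((hadjc c' hc').2 rfl).symm).1
    exact hbc ((hadjb c hc).2 hcb').symm
  obtain ⟨A, rfl, hbrA⟩ := exists_bridge_singleton hbA hbr.left_mem fun v hv =>
    hadjb v (Finset.mem_union_left _ hv)
  obtain ⟨C, rfl, hbrC⟩ := exists_bridge_singleton hcC hbr.right_mem fun v hv =>
    hadjc v (Finset.mem_union_right _ hv)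
  exact ⟨A, C, rfl, hbrA, hbrC, hbr, hbrA.treeOn_left hA (treeOn_singleton b),
    hbrC.treeOn_left hC (treeOn_singleton c)⟩

lemma TwoNbrs.repBy_pentagon (h : TwoNbrs G (A ∪ {b} ∪ ({c'} ∪ {c})) w b c)
    (hk : WellCoveredOn G (A ∪ {b} ∪ ({c'} ∪ {c})) k) (hA : TreeOn G A)
    (hb : Bridge G A {b} b' b) (hbr : Bridge G (A ∪ {b}) ({c'} ∪ {c}) b' c')
    (hc : Bridge G {c'} {c} c' c) : RepBy G (insert w (A ∪ {b} ∪ ({c'} ∪ {c}))) w 0 1 := by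
  have hb'S : WellCoveredAt G (A ∪ {b} ∪ ({c'} ∪ {c})) b' 0 := by
    rw [Finset.union_right_comm] at hk ⊢
    exact hk.wellCoveredAt_of_pendant (hbr.branch.bridge_union hb)
  have hb'A : WellCoveredAt G A b' 1 :=
    ((hb'S.of_bridge hbr (by simp) hc.adj).1.of_pendant hb).2
  exact (hA.repBy hb.left_mem hb'A).pentagon hb hbr hc h

/-- Otherwise both neighbours of `w` could be added to a maximal independent set of `G[S] - N[w]`
containing `I`. -/
lemma TwoNbrs.exists_adj_forall_not_adj (h : TwoNbrs G B w b c)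
    (hw : WellCoveredAt G (insert w B) w 0) (hbc : ¬ G.Adj b c) (hI : IsIndepFinset G I)
    (hIB : I ⊆ B) (hb : b ∉ I) (hc : c ∉ I) :
    ∃ u ∈ B, (G.Adj u b ∨ G.Adj u c) ∧ ∀ i ∈ I, ¬ G.Adj i u := by
  by_contra! hcon
  have hIS : I ⊆ outside G (insert w B) w := fun v hv =>
    h.mem_outside (hIB hv) (fun e => hb (e ▸ hv)) fun e => hc (e ▸ hv)
  have hcard := hw.card_eq_one hI hIS (J := {b, c})
    (isIndepFinset_insert.2 ⟨by simp [IsIndepFinset], by simpa⟩)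
    (Finset.insert_subset_iff.2 ⟨Finset.mem_insert_of_mem h.left_mem,
      Finset.singleton_subset_iff.2 (Finset.mem_insert_of_mem h.right_mem)⟩)
    (by simp [h.adj_iff _ h.left_mem, h.adj_iff _ h.right_mem])
    (fun u hu v hv huv => hcon u
      (Finset.mem_of_mem_insert_of_ne (outside_subset hu) (_root_.mem_outside.1 hu).2.1)
      (by grind))
    fun v hv hwv hvbc => absurd
      ((h.adj_iff v (Finset.mem_of_mem_insert_of_ne hv hwv.ne')).1 hwv) (by simpa using hvbc)
  rw [Finset.card_pair h.ne] at hcard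
  omega

/-- If both trees were larger, they would contain further neighbours `p` of `b'` and `q` of `c'`,
and `{p, q}` would dominate `b'` and `c'`. -/
lemma TwoNbrs.eq_singleton_or_eq_singleton (h : TwoNbrs G (A ∪ {b} ∪ (C ∪ {c})) w b c)
    (hw : WellCoveredAt G (insert w (A ∪ {b} ∪ (C ∪ {c}))) w 0) (hA : TreeOn G A)
    (hC : TreeOn G C) (hb : Bridge G A {b} b' b) (hc : Bridge G C {c} c' c)
    (hbr : Bridge G (A ∪ {b}) (C ∪ {c}) b' c') (hbc : ¬ G.Adj b c) : A = {b'} ∨ C = {c'} := by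
  by_contra! hcon
  obtain ⟨p, hp, hb'p⟩ := hA.conn.exists_adj hb.left_mem hcon.1
  obtain ⟨q, hq, hc'q⟩ := hC.conn.exists_adj hc.left_mem hcon.2
  have hbS := hbr.branch.bridge_union hb
  have hcS := hbr.symm.branch.bridge_union hc
  have hpq : ¬ G.Adj p q := fun hpq =>
    hb'p.ne ((hbr.adj_iff p (by simp [hp]) q (by simp [hq])).1 hpq).1.symm
  have hbpq := hbS.symm.left_notMem
  have hcpq := hcS.symm.left_notMem
  obtain ⟨u, hu, hubc, hpqu⟩ := h.exists_adj_forall_not_adj hw hbc (I := {p, q})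
    (isIndepFinset_insert.2 ⟨by simp [IsIndepFinset], by simpa⟩) (by grind) (by grind) (by grind)
  rcases hubc with hub | huc
  · obtain ⟨rfl, -⟩ := (hbS.adj_iff u (by have := hub.ne; grind) b (by simp)).1 hub
    exact hpqu p (by simp) hb'p.symm
  · obtain ⟨rfl, -⟩ := (hcS.adj_iff u (by have := huc.ne; grind) c (by simp)).1 huc
    exact hpqu q (by simp) hc'q.symm

lemma TwoNbrs.repBy_of_not_adj (h : TwoNbrs G B w b c) (hB : TreeOn G B)
    (hw : WellCoveredAt G (insert w B) w 0) (hbc : ¬ G.Adj b c) :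
    RepBy G (insert w B) w 0 1 := by
  obtain ⟨k, hk⟩ := h.wellCoveredOn hw
  obtain ⟨b', hb', c', hc', hb'c', hadjb, hadjc⟩ := h.exists_adj_iff hB
    (fun p hp q hq hbp hcq => h.adj_of_adj hw hp hq hbp hcq (fun e => hbc (e ▸ hbp))
      fun e => hbc (e ▸ hcq.symm)) hbc
  obtain ⟨A, C, rfl, hb, hc, hbr, hA, hC⟩ :=
    hB.exists_bridge_of_pendants h.left_mem h.right_mem hb' hc' hbc hb'c' hadjb hadjc
  rcases h.eq_singleton_or_eq_singleton hw hA hC hb hc hbr hbc with rfl | rfl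
  · rw [Finset.union_comm] at h hk ⊢
    exact h.symm.repBy_pentagon hk hC hc hbr.symm hb
  · exact h.repBy_pentagon hk hA hb hbr hc

theorem UniOn.repBy (hS : UniOn G S) (hw : w ∈ S) (h : WellCoveredAt G S w e)
    (hodd : Odd (S.card + e)) : RepBy G S w e 1 := by
  induction S using Finset.strongInduction generalizing w e with
  | H S ih =>
    rw [Nat.odd_iff] at hodd
    rcases hS.exists_bridge_or_twoNbrs hw with
      ⟨A, B, b, rfl, hbr, ⟨hA, hB⟩ | ⟨hA, hB⟩⟩ | ⟨B, b, c, rfl, hB, hn⟩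
    · rw [Finset.card_union_of_disjoint hbr.disjoint] at hodd
      rcases h.pendant_or_bridge hbr hB.conn with ⟨rfl, -, -⟩ | ⟨hwA, hbB⟩
      · exact absurd rfl (hB.ne_singleton b)
      · have hArep := hA.repBy hbr.left_mem hwA
        have ⟨_, a, _, hcard, _⟩ := hArep
        have hBrep := ih B hbr.right_ssubset hB hbr.right_mem hbB (Nat.odd_iff.2 (by omega))
        simpa only [zero_add] using hArep.join hBrep hbr
    · rw [Finset.card_union_of_disjoint hbr.disjoint] at hodd
      rcases h.pendant_or_bridge hbr hB.conn with ⟨rfl, rfl, hwA⟩ | ⟨hwA, hbB⟩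
      · rw [Finset.card_singleton] at hodd
        exact (ih A hbr.left_ssubset hA hbr.left_mem hwA (Nat.odd_iff.2 (by omega))).addLeaf hbr
      · have hBrep := hB.repBy hbr.right_mem hbB
        have ⟨_, a, _, hcard, _⟩ := hBrep
        have hArep := ih A hbr.left_ssubset hA hbr.left_mem hwA (Nat.odd_iff.2 (by omega))
        simpa only [add_zero] using hArep.join hBrep hbr
    · have hBc : B ≠ {b} := fun hBb => hn.ne (Finset.mem_singleton.1 (hBb ▸ hn.right_mem)).symm
      obtain ⟨k, hk⟩ := hn.wellCoveredOn h
      have heven := Nat.even_iff.1 (hB.even_card hk hn.left_mem hBc)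
      rw [Finset.card_insert_of_notMem hn.notMem] at hodd
      obtain rfl : e = 0 := by have := h.le_one; omega
      by_cases hbc : G.Adj b c
      · exact hn.repBy_of_adj hB h hbc
      · exact hn.repBy_of_not_adj hB h hbc

end RepBy

/-! ### Cycles -/

section Cycle

variable {V W : Type*} {G : SimpleGraph V} {H : SimpleGraph W}

lemma isIndepFinset_map (e : H ≃g G) {s : Finset W} :
    IsIndepFinset G (s.map e.toEquiv.toEmbedding) ↔ IsIndepFinset H s := by
  simp only [IsIndepFinset, Finset.mem_map, Equiv.coe_toEmbedding, forall_exists_index, and_imp,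
    forall_apply_eq_imp_iff₂]
  exact forall₂_congr fun a _ => forall₂_congr fun b _ => not_congr e.map_adj_iff

lemma indepPoly_congr [Fintype V] [Fintype W] (e : H ≃g G) : indepPoly H = indepPoly G := by
  classical
  refine Fintype.sum_equiv (Equiv.finsetCongr e.toEquiv) _ _ fun s => ?_
  simp only [Equiv.finsetCongr_apply, isIndepFinset_map, Finset.card_map]

lemma WellCovered.of_iso (hG : WellCovered G) (e : H ≃g G) : WellCovered H := by
  classical
  have hmax : ∀ s : Finset W, (∀ v ∉ s, ¬ IsIndepFinset H (insert v s)) →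
      ∀ v ∉ s.map e.toEquiv.toEmbedding,
        ¬ IsIndepFinset G (insert v (s.map e.toEquiv.toEmbedding)) := by
    intro s hs v hv
    obtain ⟨v, rfl⟩ := e.toEquiv.surjective v
    have hvs := hs v fun hvs => hv (Finset.mem_map_of_mem _ hvs)
    rwa [← isIndepFinset_map e, Finset.map_insert] at hvs
  intro s t hs hs' ht ht'
  have := hG _ _ ((isIndepFinset_map e).2 hs) (by convert hmax s (by convert hs'))
    ((isIndepFinset_map e).2 ht) (by convert hmax t (by convert ht'))
  simpa only [Finset.card_map] using this

lemma cycleGraph_adj_iff {n : ℕ} (hn : 3 ≤ n) {u v : Fin n} : (cycleGraph n).Adj u v ↔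
    v.val = u.val + 1 ∨ u.val = v.val + 1 ∨ (u.val = 0 ∧ v.val + 1 = n) ∨
      (v.val = 0 ∧ u.val + 1 = n) := by
  have hsub : ∀ a b : Fin n, (a - b).val = if b.val ≤ a.val then a.val - b.val else
      n + a.val - b.val := by
    intro a b
    split_ifs with h
    · exact Fin.sub_val_of_le h
    · exact Fin.coe_sub_iff_lt.2 (not_le.1 h)
  rw [cycleGraph_adj', hsub, hsub]
  split_ifs <;> omega

/-- The independent sets `{1, 4, n - 2}` and `{0, 2, 4, n - 2}` have the same closed
neighbourhood. -/
lemma not_wellCovered_cycleGraph {n : ℕ} (hn : 8 ≤ n) : ¬ WellCovered (cycleGraph n) := by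
  intro h
  obtain ⟨k, hk⟩ := h.exists_wellCoveredOn
  have hadj {u v : Fin n} := cycleGraph_adj_iff (u := u) (v := v) (by omega)
  let x (i : ℕ) (hi : i < n) : Fin n := ⟨i, hi⟩
  have hcard := hk.card_eq (I := {x 1 (by omega), x 4 (by omega), x (n - 2) (by omega)})
    (J := {x 0 (by omega), x 2 (by omega), x 4 (by omega), x (n - 2) (by omega)})
    (by simp [IsIndepFinset, hadj, x]; omega) (by simp [IsIndepFinset, hadj, x]; omega)
    (Finset.subset_univ _) (Finset.subset_univ _) (fun v _ => by
      have := v.2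
      simp only [Finset.mem_insert, Finset.mem_singleton, exists_eq_or_imp, exists_eq_left, hadj]
      simp only [Fin.ext_iff, x]
      omega)
  rw [Finset.card_eq_three.2 ⟨_, _, _, ?_, ?_, ?_, rfl⟩,
    Finset.card_insert_of_notMem, Finset.card_eq_three.2 ⟨_, _, _, ?_, ?_, ?_, rfl⟩] at hcard
  · omega
  all_goals
    simp only [x, ne_eq, Fin.ext_iff, Finset.mem_insert, Finset.mem_singleton]
    omega

lemma Unicyclic.nontrivial [Fintype V] (h : Unicyclic G) : Nontrivial V := by
  by_contra hV
  rw [not_nontrivial_iff_subsingleton] at hV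
  have hcard := h.2
  rw [Subsingleton.elim G ⊥, edgeSet_bot, Set.ncard_empty] at hcard
  have := h.1.nonempty
  exact Fintype.card_ne_zero hcard.symm

lemma Unicyclic.exists_degree_eq_one_or_isRegularOfDegree [Fintype V] [DecidableRel G.Adj]
    (h : Unicyclic G) : (∃ v, G.degree v = 1) ∨ G.IsRegularOfDegree 2 := by
  classical
  rw [or_iff_not_imp_left, not_exists]
  intro hne
  have := h.nontrivial
  have hge : ∀ v ∈ Finset.univ, 2 ≤ G.degree v := fun v _ => by
    have := h.1.preconnected.degree_pos_of_nontrivial v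
    have := hne v
    omega
  have hsum : ∑ v : V, 2 = ∑ v, G.degree v := by
    rw [sum_degrees_eq_twice_card_edges, ← Set.ncard_coe_finset, coe_edgeFinset, h.2]
    simp [mul_comm]
  exact fun v => ((Finset.sum_eq_sum_iff_of_le hge).1 hsum v (Finset.mem_univ v)).symm

lemma isHamiltonianCycle_of_forall_mem_support [DecidableEq V] {v : V} {p : G.Walk v v}
    (hp : p.IsCycle) (h : ∀ u, u ∈ p.support) : p.IsHamiltonianCycle := by
  refine ⟨hp, hp.isPath_tail.isHamiltonian_of_mem fun u => ?_⟩
  rw [p.support_tail_of_not_nil hp.not_nil]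
  rcases (p.mem_support_iff).1 (h u) with rfl | hu
  · exact p.end_mem_tail_support hp.not_nil
  · exact hu

lemma map_adj_iff_of_isRegularOfDegree [LocallyFinite G] [LocallyFinite H] {d : ℕ} (f : H →g G)
    (hf : Function.Injective f) (hG : G.IsRegularOfDegree d) (hH : H.IsRegularOfDegree d)
    {a b : W} : G.Adj (f a) (f b) ↔ H.Adj a b := by
  classical
  refine ⟨fun hab => ?_, f.map_adj⟩
  have himage : (H.neighborFinset a).image f = G.neighborFinset (f a) := by
    refine Finset.eq_of_subset_of_card_le (fun v hv => ?_) ?_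
    · obtain ⟨c, hc, rfl⟩ := Finset.mem_image.1 hv
      exact (mem_neighborFinset _ _ _).2 (f.map_adj ((mem_neighborFinset _ _ _).1 hc))
    · rw [Finset.card_image_of_injective _ hf, card_neighborFinset_eq_degree,
        card_neighborFinset_eq_degree, hG.degree_eq, hH.degree_eq]
  rw [← mem_neighborFinset, ← himage, Finset.mem_image] at hab
  obtain ⟨c, hc, hcb⟩ := hab
  exact hf hcb ▸ (mem_neighborFinset _ _ _).1 hc

lemma nonempty_iso_cycleGraph [Fintype V] [DecidableRel G.Adj] (hG : G.Connected)
    (h : G.IsRegularOfDegree 2) : Nonempty (cycleGraph (Fintype.card V) ≃g G) := by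
  classical
  have hncard : ∀ v, (G.neighborSet v).ncard = 2 := fun v => by
    rw [← h.degree_eq v, ← card_neighborFinset_eq_degree, ← Set.ncard_coe_finset,
      coe_neighborFinset]
  obtain ⟨v₀⟩ := hG.nonempty
  obtain ⟨p, hp, hverts⟩ :=
    IsCycles.exists_cycle_toSubgraph_verts_eq_connectedComponentSupp (fun v _ => hncard v)
      (v := v₀) (c := G.connectedComponentMk v₀) rfl
      (Set.nonempty_of_ncard_ne_zero (by rw [hncard]; decide))
  have hham : p.IsHamiltonianCycle := isHamiltonianCycle_of_forall_mem_support hp fun v => by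
    rw [← Walk.mem_verts_toSubgraph, hverts]
    exact ConnectedComponent.sound (hG.preconnected v v₀)
  have hcard := hham.length_eq
  have h3 : 2 < Fintype.card V := hcard ▸ hp.three_le_length
  obtain ⟨f⟩ := (cycleGraph_isContained_iff h3).2 ⟨v₀, p, hp, hcard⟩
  have hbij : Function.Bijective f.toHom :=
    (Fintype.bijective_iff_injective_and_card _).2 ⟨f.injective, Fintype.card_fin _⟩
  have hreg : (cycleGraph (Fintype.card V)).IsRegularOfDegree 2 := by
    obtain ⟨m, hm⟩ := Nat.exists_eq_add_of_le' h3
    rw [hm]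
    exact fun v => cycleGraph_degree_three_le
  exact ⟨Equiv.ofBijective f.toHom hbij,
    map_adj_iff_of_isRegularOfDegree f.toHom f.injective h hreg⟩

end Cycle

/-! ### The graphs `G(g, k, ℓ)` -/

section SP

/-- The set of the vertices with index in `[lo, hi)`, in which the paths, cycles and path stars of a
graph on `Fin N` are described. -/
def seg (N lo hi : ℕ) : Finset (Fin N) := {v | lo ≤ v.val ∧ v.val < hi}

lemma mem_seg {N lo hi : ℕ} {v : Fin N} : v ∈ seg N lo hi ↔ lo ≤ v.val ∧ v.val < hi := by
  simp [seg]

lemma bridge_singleton_right {V : Type*} {G : SimpleGraph V} {A : Finset V} {u v : V} (hv : v ∉ A)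
    (hu : u ∈ A) (h : ∀ a ∈ A, G.Adj v a ↔ a = u) : Bridge G A {v} u v :=
  ⟨Finset.disjoint_singleton_right.2 hv, hu, Finset.mem_singleton_self v, fun a ha b hb => by
    rw [Finset.mem_singleton.1 hb, G.adj_comm, h a ha, and_iff_left rfl]⟩

lemma bridge_singleton {V : Type*} {G : SimpleGraph V} {u v : V} (h : G.Adj u v) :
    Bridge G {u} {v} u v :=
  bridge_singleton_right (by simpa using h.ne') (Finset.mem_singleton_self u) (by simp [h.symm])

/-- The hypothesis says that `G` induces `P_{m+1}*` on the indices `[r, hi)`, with the path vertices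
at even offsets. -/
lemma treeRep_seg {N hi : ℕ} {G : SimpleGraph (Fin N)} (hN : hi ≤ N) (m : ℕ) (r : Fin N)
    (hm : r.val + 2 * (m + 1) = hi)
    (hadj : ∀ i j : Fin N, r.val ≤ i.val → i.val < j.val → j.val < hi →
      (G.Adj i j ↔ (i.val - r.val) % 2 = 0 ∧ (j.val = i.val + 1 ∨ j.val = i.val + 2))) :
    TreeRep G (seg N r hi) r (RTree.path m) (m + 1) (m + 1) := by
  induction m generalizing r with
  | zero =>
    have hseg : seg N r hi = {r} ∪ {⟨r.val + 1, by omega⟩} := by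
      ext v
      simp only [mem_seg, Finset.mem_union, Finset.mem_singleton, Fin.ext_iff]
      omega
    rw [hseg]
    exact (TreeRep.singleton r).addLeaf (bridge_singleton ((hadj _ _ (by simp) (by simp) (by
      simp; omega)).2 (by simp)))
  | succ m ih =>
    have hseg : seg N r hi = {r} ∪ {⟨r.val + 1, by omega⟩} ∪ seg N (r.val + 2) hi := by
      ext v
      simp only [mem_seg, Finset.mem_union, Finset.mem_singleton, Fin.ext_iff]
      omega
    have hpair := (TreeRep.singleton r).addLeaf (v := ⟨r.val + 1, by omega⟩)
      (bridge_singleton ((hadj _ _ (by simp) (by simp) (by simp; omega)).2 (by simp)))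
    have hrest := ih ⟨r.val + 2, by omega⟩ (by simp; omega) fun i j hi' hij hj => by
      simp only at hi' ⊢
      rw [hadj i j (by omega) hij hj]
      omega
    have hbr : Bridge G ({r} ∪ {⟨r.val + 1, by omega⟩}) (seg N (r.val + 2) hi) r
        ⟨r.val + 2, by omega⟩ := by
      refine ⟨Finset.disjoint_left.2 fun v hv => ?_, by simp, by simp [mem_seg]; omega,
        fun a ha y hy => ?_⟩
      · simp only [mem_seg, Finset.mem_union, Finset.mem_singleton, Fin.ext_iff] at hv ⊢
        omega
      · simp only [mem_seg, Finset.mem_union, Finset.mem_singleton, Fin.ext_iff] at ha hy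
        rw [hadj a y (by omega) (by omega) (by omega)]
        simp only [Fin.ext_iff]
        omega
    rw [hseg, add_comm (m + 1) 1]
    exact hpair.join hrest hbr

variable {g k l : ℕ} {i j : Fin (g + 2 * k + 2 * l)}

lemma SPgraph_adj_cycle (hg : 3 ≤ g) (hi : i.val < g) (hj : j.val < g) :
    (SPgraph g k l).Adj i j ↔ j.val = i.val + 1 ∨ i.val = j.val + 1 ∨
      (i.val = 0 ∧ j.val = g - 1) ∨ (j.val = 0 ∧ i.val = g - 1) := by
  simp only [SPgraph, fromRel_adj, ne_eq, Fin.ext_iff]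
  grind

lemma SPgraph_adj_cross (hg : 3 ≤ g) (hi : i.val < g) (hj : g ≤ j.val) :
    (SPgraph g k l).Adj i j ↔
      (i.val = 0 ∧ 0 < k ∧ j.val = g) ∨ (i.val = 2 ∧ 0 < l ∧ j.val = g + 2 * k) := by
  simp only [SPgraph, fromRel_adj, ne_eq, Fin.ext_iff]
  grind

lemma SPgraph_adj_tail (hg : 3 ≤ g) (hi : i.val < g) (hi₂ : i.val ≠ 2)
    (hj : j.val = 2 ∨ g + 2 * k ≤ j.val) :
    (SPgraph g k l).Adj i j ↔
      j.val = 2 ∧ (i.val = 1 ∨ i.val = 3 ∨ (i.val = 0 ∧ g = 3)) := by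
  rcases hj with hj | hj
  · rw [SPgraph_adj_cycle hg hi (by omega)]
    omega
  · rw [SPgraph_adj_cross hg hi (by omega)]
    omega

lemma SPgraph_adj_fst (hg : 3 ≤ g) (hi : g ≤ i.val) (hij : i.val < j.val)
    (hj : j.val < g + 2 * k) :
    (SPgraph g k l).Adj i j ↔ (i.val - g) % 2 = 0 ∧ (j.val = i.val + 1 ∨ j.val = i.val + 2) := by
  simp only [SPgraph, fromRel_adj, ne_eq, Fin.ext_iff]
  grind

lemma SPgraph_adj_snd (hg : 3 ≤ g) (hi : g + 2 * k ≤ i.val) (hij : i.val < j.val) :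
    (SPgraph g k l).Adj i j ↔
      (i.val - (g + 2 * k)) % 2 = 0 ∧ (j.val = i.val + 1 ∨ j.val = i.val + 2) := by
  simp only [SPgraph, fromRel_adj, ne_eq, Fin.ext_iff]
  grind

lemma SPgraph_not_adj_snd_fst (hg : 3 ≤ g) (hi : g + 2 * k ≤ i.val) (hj : g ≤ j.val)
    (hj' : j.val < g + 2 * k) : ¬ (SPgraph g k l).Adj i j := by
  simp only [SPgraph, fromRel_adj, ne_eq, Fin.ext_iff]
  grind

lemma treeRep_SPgraph_two (hg : 3 ≤ g) (c : Fin (g + 2 * k + 2 * l)) (hc : c.val = 2) :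
    TreeRep (SPgraph g k l) ({c} ∪ seg _ (g + 2 * k) (g + 2 * k + 2 * l)) c (RTree.path l)
      l (l + 1) := by
  rcases l with _ | l
  · have hempty : seg (g + 2 * k + 2 * 0) (g + 2 * k) (g + 2 * k + 2 * 0) = ∅ := by
      ext v
      simp only [mem_seg, Finset.notMem_empty, iff_false]
      omega
    rw [hempty, Finset.union_empty]
    exact TreeRep.singleton c
  · have hseg : TreeRep (SPgraph g k (l + 1)) (seg _ (g + 2 * k) (g + 2 * k + 2 * (l + 1)))
        ⟨g + 2 * k, by omega⟩ (RTree.path l) (l + 1) (l + 1) :=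
      treeRep_seg le_rfl l ⟨g + 2 * k, by omega⟩ rfl fun i j hi hij _ => SPgraph_adj_snd hg hi hij
    have hbridge : Bridge (SPgraph g k (l + 1)) {c} (seg _ (g + 2 * k) (g + 2 * k + 2 * (l + 1)))
        c ⟨g + 2 * k, by omega⟩ := by
      refine (bridge_singleton_right ?_ (by simp [mem_seg]) fun v hv => ?_).symm
      · rw [mem_seg]
        omega
      · rw [mem_seg] at hv
        rw [SPgraph_adj_cross hg (by omega) (by omega), Fin.ext_iff]
        simp only
        omega
    simpa only [RTree.path, zero_add, add_comm 1] using (TreeRep.singleton c).join hseg hbridge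

lemma mem_two_union_seg {N lo hi : ℕ} (h2 : 2 < N) {v : Fin N} (hhi : N ≤ hi) :
    v ∈ {⟨2, h2⟩} ∪ seg N lo hi ↔ v.val = 2 ∨ lo ≤ v.val := by
  simp only [Finset.mem_union, Finset.mem_singleton, mem_seg, Fin.ext_iff]
  omega

lemma bridge_SPgraph_two_one (hg : 3 ≤ g) :
    Bridge (SPgraph g k l) ({⟨2, by omega⟩} ∪ seg _ (g + 2 * k) (g + 2 * k + 2 * l))
      {⟨1, by omega⟩} ⟨2, by omega⟩ ⟨1, by omega⟩ := by
  refine bridge_singleton_right ?_ ?_ fun v hv => ?_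
  · rw [mem_two_union_seg _ le_rfl]
    simp only
    omega
  · simp
  · rw [mem_two_union_seg _ le_rfl] at hv
    rw [SPgraph_adj_tail hg (by simp only; omega) (by simp) hv, Fin.ext_iff]
    simp

lemma bridge_SPgraph_two_three : Bridge (SPgraph 5 k l)
    ({⟨2, by omega⟩} ∪ seg _ (5 + 2 * k) (5 + 2 * k + 2 * l) ∪ {⟨1, by omega⟩})
    ({⟨3, by omega⟩} ∪ {⟨4, by omega⟩}) ⟨2, by omega⟩ ⟨3, by omega⟩ := by
  refine ⟨Finset.disjoint_left.2 fun v hv => ?_, by simp, by simp, fun v hv w hw => ?_⟩ <;>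
    rw [Finset.mem_union, mem_two_union_seg _ le_rfl] at hv <;>
    simp only [Finset.mem_union, Finset.mem_singleton, Fin.ext_iff] at *
  · omega
  · rw [(SPgraph 5 k l).adj_comm]
    rcases hv with hv | hv
    · rw [SPgraph_adj_tail (by norm_num) (by omega) (by omega) hv]
      omega
    · rw [SPgraph_adj_cycle (by norm_num) (by omega) (by omega)]
      omega

lemma treeRep_SPgraph_three (c : Fin (3 + 2 * k + 2 * l)) (hc : c.val = 0) :
    TreeRep (SPgraph 3 k l) (seg _ 0 3 ∪ seg _ (3 + 2 * k) (3 + 2 * k + 2 * l)) c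
      (RTree.path (l + 1)) (l + 1) (l + 1) := by
  have hS : insert c ({⟨2, by omega⟩} ∪ seg _ (3 + 2 * k) (3 + 2 * k + 2 * l) ∪
      {⟨1, by omega⟩}) = seg _ 0 3 ∪ seg _ (3 + 2 * k) (3 + 2 * k + 2 * l) := by
    ext v
    simp only [Finset.mem_insert, Finset.mem_union, Finset.mem_singleton, mem_seg, Fin.ext_iff]
    omega
  rw [← hS]
  refine (treeRep_SPgraph_two le_rfl _ rfl).triangle (bridge_SPgraph_two_one le_rfl) ?_
    fun v hv => ?_
  · simp only [Finset.mem_union, Finset.mem_singleton, mem_seg, Fin.ext_iff]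
    omega
  · rw [Finset.mem_union, mem_two_union_seg _ le_rfl] at hv
    simp only [Finset.mem_singleton, Fin.ext_iff] at hv ⊢
    rcases hv with hv | hv
    · rw [SPgraph_adj_tail le_rfl (by omega) (by omega) hv]
      omega
    · rw [SPgraph_adj_cycle le_rfl (by omega) (by omega)]
      omega

lemma treeRep_SPgraph_five (c : Fin (5 + 2 * k + 2 * l)) (hc : c.val = 0) :
    TreeRep (SPgraph 5 k l) (seg _ 0 5 ∪ seg _ (5 + 2 * k) (5 + 2 * k + 2 * l)) c
      (RTree.path (l + 2)) (l + 2) (l + 2) := by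
  have h₃₄ : Bridge (SPgraph 5 k l) {⟨3, by omega⟩} {⟨4, by omega⟩} ⟨3, by omega⟩
      ⟨4, by omega⟩ :=
    bridge_singleton ((SPgraph_adj_cycle (by norm_num) (by simp) (by simp)).2 (by simp))
  have hS : insert c ({⟨2, by omega⟩} ∪ seg _ (5 + 2 * k) (5 + 2 * k + 2 * l) ∪
      {⟨1, by omega⟩} ∪ ({⟨3, by omega⟩} ∪ {⟨4, by omega⟩})) =
      seg _ 0 5 ∪ seg _ (5 + 2 * k) (5 + 2 * k + 2 * l) := by
    ext v
    simp only [Finset.mem_insert, Finset.mem_union, Finset.mem_singleton, mem_seg, Fin.ext_iff]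
    omega
  rw [← hS]
  refine (treeRep_SPgraph_two (by norm_num) _ rfl).pentagon (bridge_SPgraph_two_one (by norm_num))
    bridge_SPgraph_two_three h₃₄ ?_ fun v hv => ?_
  · simp only [Finset.mem_union, Finset.mem_singleton, mem_seg, Fin.ext_iff]
    omega
  · rw [Finset.mem_union, Finset.mem_union, mem_two_union_seg _ le_rfl] at hv
    simp only [Finset.mem_union, Finset.mem_singleton, Fin.ext_iff] at hv ⊢
    rcases hv with (hv | hv) | hv
    · rw [SPgraph_adj_tail (by norm_num) (by omega) (by omega) hv]
      omega
    all_goals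
      rw [SPgraph_adj_cycle (by norm_num) (by omega) (by omega)]
      omega

lemma treeRep_SPgraph_zero (hg : g = 3 ∨ g = 5) (c : Fin (g + 2 * k + 2 * l)) (hc : c.val = 0) :
    TreeRep (SPgraph g k l) (seg _ 0 g ∪ seg _ (g + 2 * k) (g + 2 * k + 2 * l)) c
      (RTree.path (l + g / 2)) (l + g / 2) (l + g / 2) := by
  rcases hg with rfl | rfl
  exacts [treeRep_SPgraph_three c hc, treeRep_SPgraph_five c hc]

lemma bridge_SPgraph (hg : 3 ≤ g) (hk : 0 < k) :
    Bridge (SPgraph g k l) (seg _ 0 g ∪ seg _ (g + 2 * k) (g + 2 * k + 2 * l))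
      (seg _ g (g + 2 * k)) ⟨0, by omega⟩ ⟨g, by omega⟩ := by
  refine ⟨Finset.disjoint_left.2 fun v hv => ?_, ?_, ?_, fun u hu v hv => ?_⟩
  · simp only [mem_seg, Finset.mem_union] at hv ⊢
    omega
  · simp only [mem_seg, Finset.mem_union]
    omega
  · simp only [mem_seg]
    omega
  · simp only [mem_seg, Finset.mem_union] at hu hv
    simp only [Fin.ext_iff]
    rcases hu with hu | hu
    · rw [SPgraph_adj_cross hg hu.2 hv.1]
      omega
    · simp only [SPgraph_not_adj_snd_fst hg hu.1 hv.1 hv.2, false_iff]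
      omega

lemma eval_SPgraph {a : ℕ} (hg : g = 3 ∨ g = 5) (ha : g + 2 * k + 2 * l = 2 * a + 1) {x : ℝ}
    (hx : -1 < x) : (indepPoly (SPgraph g k l)).eval x =
      (1 + x) ^ a * (RTree.path a).poly (x / (1 + x)) := by
  rw [eval_indepPoly]
  have hzero := treeRep_SPgraph_zero (k := k) (l := l) hg ⟨0, by omega⟩ rfl
  rcases k with _ | k
  · obtain rfl : l + g / 2 = a := by omega
    have huniv : seg (g + 2 * 0 + 2 * l) 0 g ∪ seg _ (g + 2 * 0) (g + 2 * 0 + 2 * l) =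
        Finset.univ := by
      ext v
      simp only [Finset.mem_union, mem_seg, Finset.mem_univ, iff_true]
      omega
    rw [huniv] at hzero
    exact hzero.indepSum_eq (Finset.mem_univ _) hx
  · obtain rfl : l + g / 2 + k + 1 = a := by omega
    have hseg : TreeRep (SPgraph g (k + 1) l) (seg _ g (g + 2 * (k + 1))) ⟨g, by omega⟩
        (RTree.path k) (k + 1) (k + 1) :=
      treeRep_seg (by omega) k ⟨g, by omega⟩ rfl fun i j =>
        SPgraph_adj_fst (by omega : 3 ≤ g)
    have hbridge := bridge_SPgraph (l := l) (by omega : 3 ≤ g) k.succ_pos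
    have hjoin := hzero.join hseg hbridge
    have huniv : seg (g + 2 * (k + 1) + 2 * l) 0 g ∪
        seg _ (g + 2 * (k + 1)) (g + 2 * (k + 1) + 2 * l) ∪ seg _ g (g + 2 * (k + 1)) =
        Finset.univ := by
      ext v
      simp only [Finset.mem_union, mem_seg, Finset.mem_univ, iff_true]
      omega
    rw [huniv] at hjoin
    rw [hjoin.indepSum_eq (Finset.mem_univ _) hx, RTree.poly_path_add, RTree.poly, ← add_assoc]

end SP

/-! ### Short cycles -/

section ShortCycle

variable {N lo hi b : ℕ} {G : SimpleGraph (Fin N)}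

lemma indepSum_seg_of_le (hb : hi ≤ b) (x : ℝ) : indepSum G (seg N b hi) x = 1 := by
  have hempty : seg N b hi = ∅ := by
    ext v
    simp only [mem_seg, Finset.notMem_empty, iff_false]
    omega
  rw [hempty, indepSum_empty]

lemma indepSum_seg_of_lt (hN : hi ≤ N)
    (hadj : ∀ i j : Fin N, lo ≤ i.val → i.val < j.val → j.val < hi →
      (G.Adj i j ↔ j.val = i.val + 1)) (hb : lo ≤ b) (hb' : b < hi) (x : ℝ) :
    indepSum G (seg N b hi) x =
      indepSum G (seg N (b + 1) hi) x + x * indepSum G (seg N (b + 2) hi) x := by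
  have hmem : (⟨b, by omega⟩ : Fin N) ∈ seg N b hi := mem_seg.2 ⟨le_rfl, hb'⟩
  have herase : (seg N b hi).erase ⟨b, by omega⟩ = seg N (b + 1) hi := by
    ext v
    simp only [Finset.mem_erase, mem_seg, ne_eq, Fin.ext_iff]
    omega
  have houtside : outside G (seg N b hi) ⟨b, by omega⟩ = seg N (b + 2) hi := by
    ext v
    simp only [mem_outside, mem_seg, ne_eq, Fin.ext_iff]
    by_cases hv : b < v.val ∧ v.val < hi
    · rw [hadj _ v hb hv.1 hv.2]
      simp only
      omega
    · omega
  rw [indepSum_eq_erase_add_outside hmem, herase, houtside]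

/-- The hypothesis says that `G` induces the path in increasing order on the indices `[lo, hi)`. -/
lemma indepSum_seg_path (hN : hi ≤ N)
    (hadj : ∀ i j : Fin N, lo ≤ i.val → i.val < j.val → j.val < hi →
      (G.Adj i j ↔ j.val = i.val + 1)) (x : ℝ) {m : ℕ} (hb : lo ≤ b) (hm : b + m + 1 = hi) :
    indepSum G (seg N b hi) x = (RTree.path m).poly x ∧
      x * indepSum G (seg N (b + 2) hi) x = (RTree.path m).rootPoly x := by
  induction m generalizing b with
  | zero =>
    rw [indepSum_seg_of_lt hN hadj hb (by omega), indepSum_seg_of_le (by omega),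
      indepSum_seg_of_le (by omega), RTree.path, RTree.poly, RTree.rootPoly, mul_one]
    exact ⟨rfl, rfl⟩
  | succ m ih =>
    obtain ⟨hpoly, hroot⟩ := ih (b := b + 1) (by omega) (by omega)
    have hrest : x * indepSum G (seg N (b + 2) hi) x = (RTree.path (m + 1)).rootPoly x := by
      rw [RTree.rootPoly_path_succ, ← hpoly, ← hroot,
        indepSum_seg_of_lt hN hadj (by omega : lo ≤ b + 1) (by omega), add_sub_cancel_right]
    exact ⟨by rw [indepSum_seg_of_lt hN hadj hb (by omega), hpoly, hrest, RTree.poly_path_succ],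
      hrest⟩

lemma eval_cycleGraph (m : ℕ) (x : ℝ) : (indepPoly (cycleGraph (m + 3))).eval x =
    (RTree.path (m + 1)).poly x + (RTree.path (m + 1)).rootPoly x := by
  have hadj (i j : Fin (m + 3)) (hi : 1 ≤ i.val) (hij : i.val < j.val) :
      (cycleGraph (m + 3)).Adj i j ↔ j.val = i.val + 1 := by
    rw [cycleGraph_adj_iff (by omega)]
    omega
  have hadj' (i j : Fin (m + 3)) (hij : i.val < j.val) (hj : j.val < m + 2) :
      (cycleGraph (m + 3)).Adj i j ↔ j.val = i.val + 1 := by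
    rw [cycleGraph_adj_iff (by omega)]
    omega
  have herase : (Finset.univ : Finset (Fin (m + 3))).erase ⟨0, by omega⟩ =
      seg (m + 3) 1 (m + 3) := by
    ext v
    simp only [Finset.mem_erase, Finset.mem_univ, mem_seg, ne_eq, Fin.ext_iff, and_true]
    omega
  have houtside : outside (cycleGraph (m + 3)) Finset.univ ⟨0, by omega⟩ =
      seg (m + 3) (0 + 2) (m + 2) := by
    ext v
    simp only [mem_outside, Finset.mem_univ, mem_seg, ne_eq, Fin.ext_iff, true_and]
    rw [cycleGraph_adj_iff (by omega)]
    simp only [true_and]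
    omega
  rw [eval_indepPoly, indepSum_eq_erase_add_outside (Finset.mem_univ ⟨0, by omega⟩), herase,
    houtside, (indepSum_seg_path le_rfl (fun i j hi hij _ => hadj i j hi hij) x le_rfl
      (by omega : 1 + (m + 1) + 1 = m + 3)).1,
    (indepSum_seg_path (by omega) (fun i j _ => hadj' i j) x le_rfl
      (by omega : 0 + (m + 1) + 1 = m + 2)).2]

/-- There is equality for `a = 1` and `a = 2`; for `a = 3` the difference is `-x ^ 3`. -/
lemma le_eval_cycleGraph {a : ℕ} (ha : 1 ≤ a) (ha' : a ≤ 3) {x : ℝ} (hx : -1 < x) (hx₀ : x ≤ 0) :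
    (1 + x) ^ a * (RTree.path a).poly (x / (1 + x)) ≤
      (indepPoly (cycleGraph (2 * a + 1))).eval x := by
  have hne : 1 + x ≠ 0 := by linarith
  interval_cases a
  · refine le_of_eq ?_
    rw [eval_cycleGraph 0]
    simp only [RTree.path, RTree.poly, RTree.rootPoly]
    field_simp
    ring
  · refine le_of_eq ?_
    rw [eval_cycleGraph 2]
    simp only [RTree.path, RTree.poly, RTree.rootPoly]
    field_simp
    ring
  · have hcube : 0 ≤ (-x) ^ 3 := pow_nonneg (neg_nonneg.2 hx₀) 3
    rw [eval_cycleGraph 4, ← sub_nonneg]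
    convert hcube using 1
    simp only [RTree.path, RTree.poly, RTree.rootPoly]
    field_simp
    ring

end ShortCycle

/-! ### The comparison -/

section Comparison

variable {V W : Type*} [Fintype V] [Fintype W] {G : SimpleGraph V} {H : SimpleGraph W}
  {τ : RTree} {a : ℕ} {x : ℝ}

lemma eval_zero_indepPoly (G : SimpleGraph V) : (indepPoly G).eval 0 = 1 := by
  classical
  rw [indepPoly, eval_finsetSum, Finset.sum_eq_single ∅]
  · simp [isIndepFinset_empty]
  · intro s _ hs
    split_ifs <;> simp [hs]
  · simp

lemma eval_indepPoly_pos (hx : xi G < x) (hx₀ : x ≤ 0) : 0 < (indepPoly G).eval x := by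
  by_contra! hle
  have hne : indepPoly G ≠ 0 := fun h => by simpa [h] using eval_zero_indepPoly G
  have hbdd : BddAbove {t : ℝ | (indepPoly G).eval t = 0} :=
    ((indepPoly G).roots.toFinset.finite_toSet.subset fun t ht => by simpa [hne] using ht).bddAbove
  obtain ⟨z, hz, hroot, -⟩ := exists_last_zero (b := 0) (indepPoly G).continuous
    (by rw [eval_zero_indepPoly]; exact one_pos) ⟨x, ⟨le_rfl, hx₀⟩, hle⟩
  exact (le_csSup hbdd hroot).not_gt (hx.trans_le hz.1)

lemma pre_of_forall_xi_lt
    (h : ∀ x, xi G < x → x ≤ 0 → (indepPoly G).eval x ≤ (indepPoly H).eval x) : Pre H G := by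
  rintro x ⟨hx, hx₀⟩
  rcases hx₀.eq_or_lt with rfl | hx₀
  · rw [eval_zero_indepPoly, eval_zero_indepPoly]
  · exact le_of_forall_mem_Ioc_of_continuous (indepPoly G).continuous (indepPoly H).continuous hx₀
      fun u hu => h u (hx.trans_lt hu.1) hu.2

lemma RTree.not_posOn_neg_one (τ : RTree) : ¬ τ.PosOn (-1) := fun h => by
  have hpos := ((h.dominatedAt_path (by norm_num)).2.path_of_le (Nat.zero_le _)).pos (by norm_num)
  norm_num [RTree.path, RTree.poly] at hpos

lemma RTree.posOn_of_xi_lt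
    (hG : ∀ x, -1 < x → (indepPoly G).eval x = (1 + x) ^ a * τ.poly (x / (1 + x)))
    (hx : -1 < x) (hxi : xi G < x) : τ.PosOn (x / (1 + x)) := by
  rintro t ⟨hxt, ht⟩
  -- The substitution `t = s / (1 + s)` has inverse `s = t / (1 - t)`.
  have ht' : 0 < 1 - t := by linarith
  have hadd : 1 + t / (1 - t) = 1 / (1 - t) := by field_simp; ring
  have hinv : t / (1 - t) / (1 + t / (1 - t)) = t := by rw [hadd]; field_simp
  have hx₁ : 0 < 1 + x := by linarith
  have hle : x ≤ t / (1 - t) := by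
    rw [div_le_iff₀ hx₁] at hxt
    rw [le_div_iff₀ ht']
    linarith
  have hpos := eval_indepPoly_pos (hxi.trans_le hle) (div_nonpos_of_nonpos_of_nonneg ht ht'.le)
  rw [hG _ (hx.trans_le hle), hinv] at hpos
  exact pos_of_mul_pos_right hpos (pow_nonneg (by rw [hadd]; positivity) _)

lemma pre_of_eval_eq
    (hG : ∀ x, -1 < x → (indepPoly G).eval x = (1 + x) ^ τ.rank * τ.poly (x / (1 + x)))
    (hH : ∀ x, -1 < x → x ≤ 0 →
      (1 + x) ^ τ.rank * (RTree.path τ.rank).poly (x / (1 + x)) ≤ (indepPoly H).eval x) :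
    Pre H G := by
  refine pre_of_forall_xi_lt fun x hxi hx₀ => ?_
  have hx : -1 < x := by
    by_contra! hx
    -- `-1` is the image of `-1 / 2` under `t = s / (1 + s)`.
    refine τ.not_posOn_neg_one ?_
    convert RTree.posOn_of_xi_lt (x := -1 / 2) hG (by norm_num) (by linarith) using 1
    norm_num
  have hx₁ : 0 ≤ 1 + x := by linarith
  have hle := ((RTree.posOn_of_xi_lt hG hx hxi).dominatedAt_path
    (div_nonpos_of_nonpos_of_nonneg hx₀ hx₁)).1.1
  rw [hG x hx]
  exact (mul_le_mul_of_nonneg_left hle (pow_nonneg hx₁ _)).trans (hH x hx hx₀)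

lemma WellCovered.exists_eval_indepPoly_eq [DecidableRel G.Adj] (hwc : WellCovered G)
    (hG : Unicyclic G) (hodd : Odd (Fintype.card V)) {v : V} (hv : G.degree v = 1) :
    ∃ τ : RTree, Fintype.card V = 2 * τ.rank + 1 ∧
      ∀ x, -1 < x → (indepPoly G).eval x = (1 + x) ^ τ.rank * τ.poly (x / (1 + x)) := by
  classical
  obtain ⟨u, huv, hu⟩ := degree_eq_one_iff_existsUnique_adj.1 hv
  obtain ⟨A, hA, hbr⟩ := exists_bridge_singleton (G := G) (Finset.mem_univ v) (Finset.mem_univ u)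
    fun y _ => ⟨fun hy => hu y hy.symm, fun hy => hy ▸ huv.symm⟩
  obtain ⟨k, hk⟩ := hwc.exists_wellCoveredOn
  have hu₀ : WellCoveredAt G Finset.univ u 0 := by
    rw [hA] at hk ⊢
    exact hk.wellCoveredAt_of_pendant hbr
  obtain ⟨τ, a, hrep, hcard, hrank⟩ := hG.uniOn_univ.repBy (Finset.mem_univ u) hu₀ hodd
  obtain rfl : τ.rank = a := by omega
  refine ⟨τ, hcard, fun x hx => ?_⟩
  rw [eval_indepPoly, hrep.indepSum_eq (Finset.mem_univ u) hx]

end Comparison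

/-- Let `n ≥ 3` be odd and `G` a connected well-covered unicyclic graph of
order `n`. If `n ≤ 7` then `C_n ⪯ G`; if `n ≥ 9` then `H ⪯ G` for every graph `H` of order
`n` in the family `S_P`. -/
theorem stmt12 {V : Type*} [Fintype V] (n : ℕ) (hn : 3 ≤ n) (hodd : Odd n)
    (G : SimpleGraph V) (hcard : Fintype.card V = n)
    (hG : Unicyclic G) (hwc : WellCovered G) :
    (n ≤ 7 → Pre (cycleGraph n) G) ∧
    (9 ≤ n → ∀ (W : Type) [Fintype W] (H : SimpleGraph W),
      (∃ g k l : ℕ, (g = 3 ∨ g = 5) ∧ 1 ≤ k + l ∧ g + 2*k + 2*l = n ∧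
        Nonempty (H ≃g SPgraph g k l)) → Pre H G) := by
  classical
  obtain ⟨⟨e⟩⟩ | ⟨v, hv⟩ : Nonempty (cycleGraph n ≃g G) ∨ ∃ v, G.degree v = 1 := by
    rw [← hcard]
    exact hG.exists_degree_eq_one_or_isRegularOfDegree.symm.imp (nonempty_iso_cycleGraph hG.1) id
  · refine ⟨fun _ x _ => (congrArg (eval x) (indepPoly_congr e)).ge, fun h9 => ?_⟩
    exact absurd (hwc.of_iso e) (not_wellCovered_cycleGraph (by omega))
  · obtain ⟨τ, hτ, hval⟩ := hwc.exists_eval_indepPoly_eq hG (hcard ▸ hodd) hv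
    rw [hτ] at hcard
    subst hcard
    refine ⟨fun h7 => ?_, fun _ W _ H => ?_⟩
    · exact pre_of_eval_eq hval fun x => le_eval_cycleGraph (by omega) (by omega)
    · rintro ⟨g, k, l, hg, -, hgn, ⟨e⟩⟩
      exact pre_of_eval_eq hval fun x hx _ => by rw [indepPoly_congr e, eval_SPgraph hg hgn hx]
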